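/- arXiv:2112.06526 — 4 statements merged into one kernel-verified Lean document; each statement's English description precedes it below -/
import Mathlib

section
/- Fix λ > 0 and set p_n = λ/n. Let (k_n)_{n∈ℕ} be a sequence of positive reals such that lim_{n→∞} (log n)/k_n^{1/3} = 0 and lim_{n→∞} k_n/n³ = 0. Then lim_{n→∞} log P(T ≥ k_n) / (k_n^{2/3} · log(1/p_n)) = −6^{2/3}/2. -/
open scoped BigOperators Classical
open Finset Filter

noncomputable section

/-- Number of edges of a finite simple graph. -/
def edgeCount {V : Type*} [Fintype V] (G : SimpleGraph V) : ℕ :=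
  (Finset.univ.filter (fun e : Sym2 V => e ∈ G.edgeSet)).card

/-- Number of triangles (3-cliques) of a finite simple graph. -/
def triangleCount {V : Type*} [Fintype V] (G : SimpleGraph V) : ℕ :=
  (Finset.univ.filter (fun s : Finset V => G.IsNClique 3 s)).card

/-- Number of vertices lying in at least one triangle. -/
def vT {V : Type*} [Fintype V] (G : SimpleGraph V) : ℕ :=
  (Finset.univ.filter (fun v : V => ∃ u w : V, G.Adj v u ∧ G.Adj v w ∧ G.Adj u w)).card

/-- Degree of a vertex. -/
def deg {V : Type*} [Fintype V] (G : SimpleGraph V) (v : V) : ℕ :=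
  (Finset.univ.filter (fun u => G.Adj v u)).card

/-- Probability that the Erdős–Rényi random graph `G_{n,p}` equals the graph `G`. -/
def graphProb (n : ℕ) (p : ℝ) (G : SimpleGraph (Fin n)) : ℝ :=
  p ^ edgeCount G * (1 - p) ^ (n.choose 2 - edgeCount G)

/-- Probability of an event under the Erdős–Rényi measure. -/
def prob (n : ℕ) (p : ℝ) (A : Set (SimpleGraph (Fin n))) : ℝ :=
  ∑ G : SimpleGraph (Fin n), if G ∈ A then graphProb n p G else 0

/-- Conditional probability `P(A | B)` (with the convention `0` when `P(B) = 0`). -/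
def condProb (n : ℕ) (p : ℝ) (A B : Set (SimpleGraph (Fin n))) : ℝ :=
  prob n p (A ∩ B) / prob n p B

/-- Conditional expectation `E_G[f]` given that every edge of `G` is present. -/
def condExpect (n : ℕ) (p : ℝ) (G : SimpleGraph (Fin n)) (f : SimpleGraph (Fin n) → ℝ) : ℝ :=
  (∑ H : SimpleGraph (Fin n), if G ≤ H then graphProb n p H * f H else 0) /
    prob n p {H | G ≤ H}

/-- `E_G(T)`: conditional expectation of the number of triangles. -/
def condTri (n : ℕ) (p : ℝ) (G : SimpleGraph (Fin n)) : ℝ :=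
  condExpect n p G (fun H => (triangleCount H : ℝ))

/-- The variational quantity `Φ_{n,p,k}(a)`. -/
def Phi (n : ℕ) (p k a : ℝ) : ℝ :=
  sInf {x : ℝ | ∃ G : SimpleGraph (Fin n),
    a * k ≤ condTri n p G ∧ x = (edgeCount G : ℝ) * Real.log (1 / p)}

/-- A seed, with parameters `a, w, C, k` and edge probability `p`. -/
def IsSeed (n : ℕ) (p a w C k : ℝ) (G : SimpleGraph (Fin n)) : Prop :=
  (a - w) * k ≤ condTri n p G ∧
  (edgeCount G : ℝ) ≤ C * a * w⁻¹ * k ^ ((2 : ℝ) / 3) * Real.log (1 / p)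

/-- A core, with parameters `a, w, C, k` and edge probability `p`. -/
def IsCore (n : ℕ) (p a w C k : ℝ) (G : SimpleGraph (Fin n)) : Prop :=
  (a - 2 * w) * k ≤ condTri n p G ∧
  (edgeCount G : ℝ) ≤ C * a * w⁻¹ * k ^ ((2 : ℝ) / 3) * Real.log (1 / p) ∧
  ∀ e ∈ G.edgeSet,
    w ^ 2 * k ^ ((1 : ℝ) / 3) / (C * a * Real.log (1 / p)) ≤
      condTri n p G - condTri n p (G.deleteEdges {e})

/-- A `q`-basic graph. -/
def qBasic {V : Type*} [Fintype V] (q : ℕ) (G : SimpleGraph V) : Prop :=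
  vT G = q ∧ ∀ e ∈ G.edgeSet, vT (G.deleteEdges {e}) < q

/-- Containment of a `(δ, m)`-near-clique. -/
def containsNearClique {n : ℕ} (H : SimpleGraph (Fin n)) (δ m : ℝ) : Prop :=
  ∃ H' : SimpleGraph (Fin n), H' ≤ H ∧ 0 < edgeCount H' ∧
    ∀ v : Fin n, (∃ u, H'.Adj v u) →
      (1 - 4 * δ ^ ((1 : ℝ) / 2)) * (2 * m) ^ ((1 : ℝ) / 2) ≤ (deg H' v : ℝ)

/-- Partition function of the exponential random graph model tilted by `exp(b · V_T)`. -/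
def ergmZ (n : ℕ) (p b : ℝ) : ℝ :=
  ∑ G : SimpleGraph (Fin n), graphProb n p G * Real.exp (b * vT G)

/-- Probability of an event under the exponential random graph measure. -/
def ergmProb (n : ℕ) (p b : ℝ) (A : Set (SimpleGraph (Fin n))) : ℝ :=
  (∑ G : SimpleGraph (Fin n),
    if G ∈ A then graphProb n p G * Real.exp (b * vT G) else 0) / ergmZ n p b

/-- Edge finset. -/
def ES {V : Type*} [Fintype V] (G : SimpleGraph V) : Finset (Sym2 V) :=
  Finset.univ.filter (fun e : Sym2 V => e ∈ G.edgeSet)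

lemma mem_ES {V : Type*} [Fintype V] (G : SimpleGraph V) (e : Sym2 V) :
    e ∈ ES G ↔ e ∈ G.edgeSet := by simp [ES]

lemma edgeCount_eq {V : Type*} [Fintype V] (G : SimpleGraph V) : edgeCount G = (ES G).card := rfl

lemma ES_mono {V : Type*} [Fintype V] {G H : SimpleGraph V} : ES G ⊆ ES H ↔ G ≤ H := by
  rw [← SimpleGraph.edgeSet_subset_edgeSet]
  simp only [Finset.subset_iff, mem_ES, Set.subset_def]

lemma ES_sup {V : Type*} [Fintype V] (G H : SimpleGraph V) : ES (G ⊔ H) = ES G ∪ ES H := by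
  ext e; simp [mem_ES]

lemma ES_inf {V : Type*} [Fintype V] (G H : SimpleGraph V) : ES (G ⊓ H) = ES G ∩ ES H := by
  ext e; simp [mem_ES]

lemma ES_inj {V : Type*} [Fintype V] {G H : SimpleGraph V} (h : ES G = ES H) : G = H :=
  le_antisymm (ES_mono.1 h.le) (ES_mono.1 h.ge)

lemma ES_top_card (n : ℕ) : (ES (⊤ : SimpleGraph (Fin n))).card = n.choose 2 := by
  have := SimpleGraph.card_edgeFinset_top_eq_card_choose_two (V := Fin n)
  rw [Fintype.card_fin] at this
  rw [← this]
  congr 1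
  ext e
  simp [mem_ES]

lemma prob_ge (n : ℕ) (p : ℝ) (F : SimpleGraph (Fin n)) :
    prob n p {H | F ≤ H} = p ^ edgeCount F := by
  have hF : ES F ⊆ ES (⊤ : SimpleGraph (Fin n)) := ES_mono.2 le_top
  have key := Finset.sum_pow_mul_eq_add_pow p (1 - p) (ES (⊤ : SimpleGraph (Fin n)) \ ES F)
  rw [show p + (1 - p) = 1 by ring, one_pow] at key
  unfold prob
  rw [← Finset.sum_filter, ← mul_one (p ^ edgeCount F), ← key, Finset.mul_sum]
  have hE : ∀ S ∈ (ES (⊤ : SimpleGraph (Fin n)) \ ES F).powerset,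
      ES (SimpleGraph.fromEdgeSet ((S ∪ ES F : Finset (Sym2 (Fin n))) : Set (Sym2 (Fin n))))
        = S ∪ ES F := by
    intro S hS
    have hS' := Finset.mem_powerset.1 hS
    ext e
    simp only [mem_ES, SimpleGraph.edgeSet_fromEdgeSet, Set.mem_sdiff, Finset.mem_coe]
    constructor
    · exact fun h => h.1
    · intro h
      refine ⟨h, ?_⟩
      have : e ∈ ES (⊤ : SimpleGraph (Fin n)) := by
        rcases Finset.mem_union.1 h with h | h
        · exact (Finset.mem_sdiff.1 (hS' h)).1
        · exact hF h
      rw [mem_ES] at this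
      exact SimpleGraph.not_isDiag_of_mem_edgeSet _ this
  refine Finset.sum_nbij' (fun H => ES H \ ES F)
    (fun S => SimpleGraph.fromEdgeSet ((S ∪ ES F : Finset (Sym2 (Fin n))) : Set (Sym2 (Fin n))))
    ?_ ?_ ?_ ?_ ?_
  · intro H hH
    exact Finset.mem_powerset.2 (Finset.sdiff_subset_sdiff (ES_mono.2 le_top) le_rfl)
  · intro S hS
    simp only [Finset.mem_filter, Finset.mem_univ, true_and, Set.mem_ofPred_eq]
    rw [← ES_mono, hE S hS]
    exact Finset.subset_union_right
  · intro H hH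
    simp only [Finset.mem_filter, Finset.mem_univ, true_and, Set.mem_ofPred_eq] at hH
    apply ES_inj
    rw [hE, Finset.sdiff_union_of_subset (ES_mono.2 hH)]
    exact Finset.mem_powerset.2 (Finset.sdiff_subset_sdiff (ES_mono.2 le_top) le_rfl)
  · intro S hS
    rw [hE S hS, Finset.union_sdiff_right]
    have := Finset.mem_powerset.1 hS
    exact Finset.sdiff_eq_self_of_disjoint
      (Finset.disjoint_of_subset_left this Finset.sdiff_disjoint)
  · intro H hH
    simp only [Finset.mem_filter, Finset.mem_univ, true_and, Set.mem_ofPred_eq] at hH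
    have h1 := Finset.card_sdiff_add_card_eq_card (ES_mono.2 hH)
    have h2 := Finset.card_sdiff_add_card_eq_card hF
    have h3 := ES_top_card n
    unfold graphProb
    rw [edgeCount_eq, edgeCount_eq, ← mul_assoc, ← pow_add]
    congr 2
    · omega
    · omega

lemma graphProb_nonneg {n : ℕ} {p : ℝ} (hp : 0 ≤ p) (hp1 : p ≤ 1) (G : SimpleGraph (Fin n)) :
    0 ≤ graphProb n p G :=
  mul_nonneg (pow_nonneg hp _) (pow_nonneg (by linarith) _)

lemma prob_mono {n : ℕ} {p : ℝ} (hp : 0 ≤ p) (hp1 : p ≤ 1) {A B : Set (SimpleGraph (Fin n))}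
    (h : A ⊆ B) : prob n p A ≤ prob n p B := by
  unfold prob
  apply Finset.sum_le_sum
  intro G _
  have := graphProb_nonneg hp hp1 G
  by_cases hA : G ∈ A
  · simp [hA, h hA]
  · simp only [hA, if_false]; split_ifs <;> linarith

lemma prob_union_le {n : ℕ} {p : ℝ} (hp : 0 ≤ p) (hp1 : p ≤ 1) (A B : Set (SimpleGraph (Fin n))) :
    prob n p (A ∪ B) ≤ prob n p A + prob n p B := by
  unfold prob
  rw [← Finset.sum_add_distrib]
  apply Finset.sum_le_sum
  intro G _
  have := graphProb_nonneg hp hp1 G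
  by_cases hA : G ∈ A <;> by_cases hB : G ∈ B <;> simp [hA, hB, this]

lemma prob_biUnion_le {n : ℕ} {p : ℝ} (hp : 0 ≤ p) (hp1 : p ≤ 1)
    (S : Finset (SimpleGraph (Fin n))) :
    prob n p {G | ∃ F ∈ S, F ≤ G} ≤ ∑ F ∈ S, p ^ edgeCount F := by
  simp_rw [← prob_ge]
  unfold prob
  rw [Finset.sum_comm]
  apply Finset.sum_le_sum
  intro G _
  have := graphProb_nonneg hp hp1 G
  split_ifs with h
  · obtain ⟨F, hF, hFG⟩ := h
    have h2 := Finset.single_le_sum (s := S)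
      (f := fun F => if G ∈ {H : SimpleGraph (Fin n) | F ≤ H} then graphProb n p G else 0)
      (fun F _ => by split_ifs <;> linarith) hF
    simpa [hFG] using h2
  · exact Finset.sum_nonneg (fun F _ => by split_ifs <;> linarith)

/-- clique graph on t -/
def KG {V : Type*} (t : Finset V) : SimpleGraph V where
  Adj a b := a ≠ b ∧ a ∈ t ∧ b ∈ t
  symm := ⟨fun _ _ h => ⟨h.1.symm, h.2.2, h.2.1⟩⟩
  loopless := ⟨fun _ h => h.1 rfl⟩

lemma KG_le {V : Type*} (t : Finset V) (G : SimpleGraph V) :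
    KG t ≤ G ↔ G.IsClique (t : Set V) := by
  constructor
  · intro h a ha b hb hab
    exact h (show (KG t).Adj a b from ⟨hab, ha, hb⟩)
  · intro h a b hab
    exact h hab.2.1 hab.2.2 hab.1

lemma KG_card {V : Type*} [Fintype V] (t : Finset V) : edgeCount (KG t) = t.card.choose 2 := by
  rw [edgeCount_eq]
  have : ES (KG t) = t.sym2.filter (fun e => ¬ e.IsDiag) := by
    ext e
    induction e with
    | _ a b =>
      simp [mem_ES, KG]
      tauto
  rw [this]
  have := Sym2.card_image_offDiag t
  rw [← this]
  congr 1
  ext e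
  induction e with
  | _ a b =>
    simp
    constructor
    · rintro ⟨⟨h1, h2⟩, h3⟩
      exact ⟨a, b, ⟨h1, h2, h3⟩, Or.inl ⟨rfl, rfl⟩⟩
    · rintro ⟨c, d, ⟨h1, h2, h3⟩, ⟨rfl, rfl⟩ | ⟨rfl, rfl⟩⟩
      · exact ⟨⟨h1, h2⟩, h3⟩
      · exact ⟨⟨h2, h1⟩, fun h => h3 h.symm⟩

lemma tri_eq {V : Type*} [Fintype V] (G : SimpleGraph V) :
    triangleCount G = ((univ : Finset V).powersetCard 3 |>.filter (fun t => KG t ≤ G)).card := by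
  unfold triangleCount
  congr 1
  ext t
  simp [SimpleGraph.isNClique_iff, KG_le]
  tauto

lemma tri_sum {V : Type*} [Fintype V] (G : SimpleGraph V) :
    (triangleCount G : ℝ) =
      ∑ t ∈ (univ : Finset V).powersetCard 3, if KG t ≤ G then (1 : ℝ) else 0 := by
  rw [tri_eq, Finset.card_filter]
  push_cast
  rfl

lemma edgeCount_sup_add {V : Type*} [Fintype V] (F K : SimpleGraph V) :
    edgeCount (F ⊔ K) + edgeCount (F ⊓ K) = edgeCount F + edgeCount K := by
  simp only [edgeCount_eq, ES_sup, ES_inf]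
  exact Finset.card_union_add_card_inter _ _

lemma edgeCount_bot {V : Type*} [Fintype V] : edgeCount (⊥ : SimpleGraph V) = 0 := by
  simp [edgeCount]

lemma count_touch (n : ℕ) (F : SimpleGraph (Fin n)) :
    (((univ : Finset (Fin n)).powersetCard 3).filter (fun t => F ⊓ KG t ≠ ⊥)).card
      ≤ n * edgeCount F := by
  have hsub : (((univ : Finset (Fin n)).powersetCard 3).filter (fun t => F ⊓ KG t ≠ ⊥)) ⊆
      ((univ : Finset (Fin n)) ×ˢ ES F).image (fun x => insert x.1 x.2.toFinset) := by
    intro t ht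
    rw [Finset.mem_filter, Finset.mem_powersetCard] at ht
    obtain ⟨⟨_, h3⟩, h⟩ := ht
    rw [SimpleGraph.ne_bot_iff_exists_adj] at h
    obtain ⟨a, b, hF, hab, ha, hb⟩ := h
    have hcard : ({a, b} : Finset (Fin n)).card = 2 := Finset.card_pair hab
    have hss : ({a, b} : Finset (Fin n)) ⊆ t := by
      intro x hx
      simp at hx
      rcases hx with rfl | rfl <;> assumption
    have h1 : (t \ {a, b}).card = 1 := by
      rw [Finset.card_sdiff_of_subset hss]; omega
    obtain ⟨c, hc⟩ := Finset.card_eq_one.1 h1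
    rw [Finset.mem_image]
    refine ⟨(c, s(a, b)), ?_, ?_⟩
    · simp [mem_ES, hF]
    · have : t = (t \ {a, b}) ∪ {a, b} := (Finset.sdiff_union_of_subset hss).symm
      rw [this, hc]
      ext x
      simp [Sym2.mem_toFinset]
      tauto
  refine (Finset.card_le_card hsub).trans (Finset.card_image_le.trans ?_)
  rw [Finset.card_product, Finset.card_univ, Fintype.card_fin, edgeCount_eq]

lemma sum_sup_le (n : ℕ) (p : ℝ) (hp : 0 ≤ p) (hp1 : p ≤ 1) (F : SimpleGraph (Fin n)) :
    ∑ t ∈ (univ : Finset (Fin n)).powersetCard 3, p ^ edgeCount (F ⊔ KG t) ≤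
      p ^ edgeCount F * (triangleCount F + p * (n * edgeCount F) + p ^ 3 * n ^ 3) := by
  have hpt : ∀ t ∈ (univ : Finset (Fin n)).powersetCard 3, p ^ edgeCount (F ⊔ KG t) ≤
      p ^ edgeCount F * ((if KG t ≤ F then (1 : ℝ) else 0) +
        p * (if F ⊓ KG t ≠ ⊥ then (1 : ℝ) else 0) + p ^ 3) := by
    intro t ht
    have h3 : edgeCount (KG t) = 3 := by
      rw [KG_card, (Finset.mem_powersetCard.1 ht).2]; rfl
    have hadd := edgeCount_sup_add F (KG t)
    have hpF := pow_nonneg hp (edgeCount F)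
    have hp3 := pow_nonneg hp 3
    by_cases hle : KG t ≤ F
    · rw [sup_eq_left.2 hle, if_pos hle]
      have : (0 : ℝ) ≤ p * (if F ⊓ KG t ≠ ⊥ then (1 : ℝ) else 0) := by split_ifs <;> simp [hp]
      nlinarith
    · rw [if_neg hle]
      by_cases hb : F ⊓ KG t = ⊥
      · rw [if_neg (by simpa using hb)]
        rw [hb, edgeCount_bot, h3, add_zero] at hadd
        rw [hadd, pow_add]
        simp
      · rw [if_pos hb]
        have hlt : edgeCount F + 1 ≤ edgeCount (F ⊔ KG t) := by
          rw [Nat.succ_le_iff, edgeCount_eq, edgeCount_eq]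
          apply Finset.card_lt_card
          rw [Finset.ssubset_iff_subset_ne]
          refine ⟨ES_mono.2 le_sup_left, fun h => hle ?_⟩
          have := ES_inj h
          rw [this]; exact le_sup_right
        have : p ^ edgeCount (F ⊔ KG t) ≤ p ^ (edgeCount F + 1) :=
          pow_le_pow_of_le_one hp hp1 hlt
        rw [pow_succ] at this
        nlinarith
  refine (Finset.sum_le_sum hpt).trans ?_
  rw [← Finset.mul_sum, Finset.sum_add_distrib, Finset.sum_add_distrib, ← tri_sum,
    ← Finset.mul_sum, Finset.sum_const, Finset.card_powersetCard, Finset.card_univ,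
    Fintype.card_fin]
  apply mul_le_mul_of_nonneg_left _ (pow_nonneg hp _)
  have h1 : ∑ t ∈ (univ : Finset (Fin n)).powersetCard 3, (if F ⊓ KG t ≠ ⊥ then (1 : ℝ) else 0)
      ≤ n * edgeCount F := by
    rw [← Finset.sum_filter, Finset.sum_const, nsmul_eq_mul, mul_one]
    have := count_touch n F
    exact_mod_cast this
  have h2 : (n.choose 3 : ℝ) ≤ n ^ 3 := by exact_mod_cast Nat.choose_le_pow n 3
  have h3 := mul_le_mul_of_nonneg_left h1 hp
  have h4 := mul_le_mul_of_nonneg_left h2 (pow_nonneg hp 3)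
  rw [nsmul_eq_mul]
  linarith

/-- Graphs without small subgraph with many triangles. -/
def NS (n : ℕ) (M : ℕ) (a : ℝ) : Set (SimpleGraph (Fin n)) :=
  {G | ∀ F ≤ G, edgeCount F ≤ M → (triangleCount F : ℝ) < a}

lemma moment_bound (n : ℕ) (p : ℝ) (hp : 0 ≤ p) (hp1 : p ≤ 1) (M : ℕ) (a : ℝ) (ha : 0 ≤ a) (r : ℕ) :
    ∀ F : SimpleGraph (Fin n), edgeCount F + 3 * r ≤ M →
    (∑ G : SimpleGraph (Fin n), if F ≤ G ∧ G ∈ NS n M a then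
      graphProb n p G * (triangleCount G : ℝ) ^ r else 0) ≤
      p ^ edgeCount F * (a + p * (n * M) + p ^ 3 * n ^ 3) ^ r := by
  have hB : 0 ≤ (a + p * (n * M) + p ^ 3 * n ^ 3) := by positivity
  induction r with
  | zero =>
    intro F hF
    rw [pow_zero, mul_one, ← prob_ge]
    unfold prob
    apply Finset.sum_le_sum
    intro G _
    have := graphProb_nonneg hp hp1 G
    by_cases h : F ≤ G
    · by_cases h' : G ∈ NS n M a <;> simp [h, h', this]
    · simp [h]
  | succ r ih =>
    intro F hF
    by_cases hs : (triangleCount F : ℝ) < a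
    · have h1 : (∑ G : SimpleGraph (Fin n), if F ≤ G ∧ G ∈ NS n M a then
          graphProb n p G * (triangleCount G : ℝ) ^ (r + 1) else 0) =
          ∑ t ∈ (univ : Finset (Fin n)).powersetCard 3,
          ∑ G : SimpleGraph (Fin n), if F ⊔ KG t ≤ G ∧ G ∈ NS n M a then
          graphProb n p G * (triangleCount G : ℝ) ^ r else 0 := by
        rw [Finset.sum_comm]
        apply Finset.sum_congr rfl
        intro G _
        split_ifs with h
        · rw [pow_succ, ← mul_assoc]
          nth_rewrite 2 [tri_sum]
          rw [Finset.mul_sum]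
          apply Finset.sum_congr rfl
          intro t _
          simp [h.1, h.2]
        · symm
          apply Finset.sum_eq_zero
          intro t _
          rw [if_neg]
          exact fun h' => h ⟨le_sup_left.trans h'.1, h'.2⟩
      rw [h1]
      have h2 : ∀ t ∈ (univ : Finset (Fin n)).powersetCard 3,
          (∑ G : SimpleGraph (Fin n), if F ⊔ KG t ≤ G ∧ G ∈ NS n M a then
          graphProb n p G * (triangleCount G : ℝ) ^ r else 0) ≤
          p ^ edgeCount (F ⊔ KG t) * (a + p * (n * M) + p ^ 3 * n ^ 3) ^ r := by
        intro t ht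
        apply ih
        have h3 : edgeCount (KG t) = 3 := by
          rw [KG_card, (Finset.mem_powersetCard.1 ht).2]; rfl
        have hadd := edgeCount_sup_add F (KG t)
        omega
      refine (Finset.sum_le_sum h2).trans ?_
      rw [← Finset.sum_mul, pow_succ (a + p * (n * M) + p ^ 3 * n ^ 3) r,
        mul_comm ((a + p * (n * M) + p ^ 3 * n ^ 3) ^ r), ← mul_assoc (p ^ edgeCount F)]
      apply mul_le_mul_of_nonneg_right _ (pow_nonneg hB r)
      refine (sum_sup_le n p hp hp1 F).trans ?_
      apply mul_le_mul_of_nonneg_left _ (pow_nonneg hp _)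
      have hFM : (edgeCount F : ℝ) ≤ M := by
        have : edgeCount F ≤ M := by omega
        exact_mod_cast this
      gcongr
    · refine le_trans (le_of_eq ?_) (by positivity)
      apply Finset.sum_eq_zero
      intro G _
      rw [if_neg]
      rintro ⟨h1, h2⟩
      exact hs (h2 F h1 (by omega))

lemma prob_no_seed (n : ℕ) (p : ℝ) (hp : 0 ≤ p) (hp1 : p ≤ 1) (r : ℕ) (a k : ℝ) (ha : 0 ≤ a)
    (hk : 0 < k) :
    prob n p ({G | k ≤ (triangleCount G : ℝ)} ∩ NS n (3 * r) a) ≤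
      ((a + p * (n * (3 * r : ℕ)) + p ^ 3 * n ^ 3) / k) ^ r := by
  rw [div_pow, le_div_iff₀ (pow_pos hk r)]
  have := moment_bound n p hp hp1 (3 * r) a ha r ⊥ (by rw [edgeCount_bot]; omega)
  rw [edgeCount_bot, pow_zero, one_mul] at this
  refine le_trans ?_ this
  unfold prob
  rw [Finset.sum_mul]
  apply Finset.sum_le_sum
  intro G _
  have hg := graphProb_nonneg hp hp1 G
  by_cases h : G ∈ NS n (3 * r) a
  · by_cases h' : k ≤ (triangleCount G : ℝ)
    · simp only [Set.mem_inter_iff, Set.mem_ofPred_eq, h, h', bot_le, and_self, if_true]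
      gcongr
    · simp only [Set.mem_inter_iff, Set.mem_ofPred_eq, h, h', bot_le, and_self, if_true, false_and,
        if_false, zero_mul]
      positivity
  · simp [h]

/-- Triangle finset. -/
def TS {V : Type*} [Fintype V] (G : SimpleGraph V) : Finset (Finset V) :=
  Finset.univ.filter (fun s : Finset V => G.IsNClique 3 s)

lemma mem_TS {V : Type*} [Fintype V] (G : SimpleGraph V) (s : Finset V) :
    s ∈ TS G ↔ G.IsNClique 3 s := by simp [TS]

lemma triangleCount_TS {V : Type*} [Fintype V] (G : SimpleGraph V) :
    triangleCount G = (TS G).card := rfl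

lemma tri_delete_le {V : Type*} [Fintype V] (G : SimpleGraph V) (u v : V) :
    triangleCount G ≤ triangleCount (G.deleteEdges {s(u, v)}) + deg G u := by
  have hsub : TS G ⊆
      TS (G.deleteEdges {s(u, v)}) ∪
      ((univ : Finset V).filter (fun w => G.Adj u w)).image
      (fun w => ({u, v, w} : Finset V)) := by
    intro t ht
    have ht' : G.IsNClique 3 t := (mem_TS _ _).1 ht
    rw [Finset.mem_union]
    by_cases h : u ∈ t ∧ v ∈ t ∧ u ≠ v
    · right
      obtain ⟨hu, hv, huv⟩ := h
      have hss : ({u, v} : Finset V) ⊆ t := by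
        rw [Finset.insert_subset_iff, Finset.singleton_subset_iff]
        exact ⟨hu, hv⟩
      have h1 : (t \ {u, v}).card = 1 := by
        rw [Finset.card_sdiff_of_subset hss, Finset.card_pair huv, ht'.card_eq]
      obtain ⟨c, hc⟩ := Finset.card_eq_one.1 h1
      have hct : c ∈ t \ {u, v} := by rw [hc]; exact Finset.mem_singleton_self c
      rw [Finset.mem_sdiff, Finset.mem_insert, Finset.mem_singleton] at hct
      rw [Finset.mem_image]
      refine ⟨c, ?_, ?_⟩
      · rw [Finset.mem_filter]
        exact ⟨Finset.mem_univ _, ht'.isClique hu hct.1 (fun h => hct.2 (Or.inl h.symm))⟩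
      · have : t = (t \ {u, v}) ∪ {u, v} := (Finset.sdiff_union_of_subset hss).symm
        rw [this, hc]
        ext x
        simp only [Finset.mem_insert, Finset.mem_union, Finset.mem_singleton]
        tauto
    · left
      rw [mem_TS]
      refine ⟨?_, ht'.card_eq⟩
      intro a ha b hb hab
      rw [SimpleGraph.deleteEdges_adj]
      refine ⟨ht'.isClique ha hb hab, ?_⟩
      intro he
      rw [Set.mem_singleton_iff, Sym2.eq_iff] at he
      apply h
      rcases he with ⟨h1, h2⟩ | ⟨h1, h2⟩
      · rw [← h1, ← h2]
        exact ⟨ha, hb, hab⟩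
      · rw [← h1, ← h2]
        exact ⟨hb, ha, fun h => hab h.symm⟩
  have e1 := Finset.card_le_card hsub
  have e2 := Finset.card_union_le
    (TS (G.deleteEdges {s(u, v)}))
    (((univ : Finset V).filter (fun w => G.Adj u w)).image (fun w => ({u, v, w} : Finset V)))
  have e3 := Finset.card_image_le (s := (univ : Finset V).filter (fun w => G.Adj u w))
      (f := fun w => ({u, v, w} : Finset V))
  rw [triangleCount_TS, triangleCount_TS]
  unfold deg
  exact e1.trans (e2.trans (Nat.add_le_add_left e3 _))

lemma edgeCount_delete {V : Type*} [Fintype V] (G : SimpleGraph V) (u v : V) (h : G.Adj u v) :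
    edgeCount (G.deleteEdges {s(u, v)}) + 1 = edgeCount G := by
  have : ES (G.deleteEdges {s(u, v)}) = (ES G).erase s(u, v) := by
    ext e
    simp [mem_ES, SimpleGraph.edgeSet_deleteEdges, and_comm]
  rw [edgeCount_eq, edgeCount_eq, this]
  exact Finset.card_erase_add_one (by simpa [mem_ES] using h)

lemma exists_core {V : Type*} [Fintype V] (F : SimpleGraph V) (τ : ℝ) :
    ∃ F' ≤ F, (triangleCount F : ℝ) - τ * edgeCount F ≤ triangleCount F' - τ * edgeCount F' ∧
      ∀ u v, F'.Adj u v → τ ≤ deg F' u := by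
  obtain ⟨F', hF', hmax⟩ := Finset.exists_max_image
    ((univ : Finset (SimpleGraph V)).filter (fun H => H ≤ F))
    (fun H => (triangleCount H : ℝ) - τ * edgeCount H) ⟨F, by simp⟩
  simp only [Finset.mem_filter, Finset.mem_univ, true_and] at hF' hmax
  refine ⟨F', hF', hmax F le_rfl, ?_⟩
  intro u v huv
  have h1 := hmax (F'.deleteEdges {s(u, v)}) ((SimpleGraph.deleteEdges_le _).trans hF')
  have h2 : (triangleCount F' : ℝ) ≤ triangleCount (F'.deleteEdges {s(u, v)}) + deg F' u := by
    exact_mod_cast tri_delete_le F' u v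
  have h3 : (edgeCount (F'.deleteEdges {s(u, v)}) : ℝ) + 1 = edgeCount F' := by
    exact_mod_cast edgeCount_delete F' u v huv
  rw [← h3] at h1
  linarith

/-- Nonisolated vertices. -/
def supp {V : Type*} [Fintype V] (G : SimpleGraph V) : Finset V :=
  Finset.univ.filter (fun v => ∃ u, G.Adj v u)

lemma sum_deg {V : Type*} [Fintype V] (G : SimpleGraph V) :
    ∑ v, deg G v = 2 * edgeCount G := by
  have := SimpleGraph.sum_degrees_eq_twice_card_edges G
  have h1 : edgeCount G = G.edgeFinset.card := by
    rw [edgeCount_eq]; congr 1; ext e; simp [mem_ES]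
  rw [h1, ← this]
  apply Finset.sum_congr rfl
  intro v _
  rw [← SimpleGraph.card_neighborFinset_eq_degree]
  unfold deg
  congr 1
  ext w
  simp

lemma supp_card {V : Type*} [Fintype V] (G : SimpleGraph V) (τ : ℝ)
    (h : ∀ u v, G.Adj u v → τ ≤ deg G u) : τ * (supp G).card ≤ 2 * edgeCount G := by
  have h1 : ∑ v ∈ supp G, τ ≤ ∑ v ∈ supp G, (deg G v : ℝ) := by
    apply Finset.sum_le_sum
    intro v hv
    simp [supp] at hv
    obtain ⟨u, hu⟩ := hv
    exact h v u hu
  have h2 : ∑ v ∈ supp G, (deg G v : ℝ) ≤ ∑ v, (deg G v : ℝ) :=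
    Finset.sum_le_sum_of_subset_of_nonneg (Finset.subset_univ _) (fun _ _ _ => by positivity)
  have h3 : ∑ v, (deg G v : ℝ) = 2 * edgeCount G := by exact_mod_cast sum_deg G
  rw [Finset.sum_const, nsmul_eq_mul] at h1
  linarith

lemma card_small_sets (n r : ℕ) :
    ((univ : Finset (Finset (Fin n))).filter (fun S => S.card ≤ r)).card ≤ (n + 1) ^ r := by
  have hsub : ((univ : Finset (Finset (Fin n))).filter (fun S => S.card ≤ r)) ⊆
      (Finset.range (r + 1)).biUnion (fun i => (univ : Finset (Fin n)).powersetCard i) := by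
    intro S hS
    simp at hS ⊢
    omega
  refine (Finset.card_le_card hsub).trans (Finset.card_biUnion_le.trans ?_)
  rw [add_pow]
  apply Finset.sum_le_sum
  intro i hi
  rw [Finset.card_powersetCard, Finset.card_univ, Fintype.card_fin, one_pow, mul_one]
  have := Nat.choose_pos (Nat.lt_succ_iff.1 (Finset.mem_range.1 hi))
  calc n.choose i ≤ n ^ i := Nat.choose_le_pow n i
    _ ≤ n ^ i * r.choose i := Nat.le_mul_of_pos_right _ this

lemma card_graphs (n r e : ℕ) :
    ((univ : Finset (SimpleGraph (Fin n))).filter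
      (fun F => edgeCount F = e ∧ (supp F).card ≤ r)).card ≤ (n + 1) ^ r * (r ^ 2).choose e := by
  have h1 : (((univ : Finset (SimpleGraph (Fin n))).filter
      (fun F => edgeCount F = e ∧ (supp F).card ≤ r)).image ES).card =
      ((univ : Finset (SimpleGraph (Fin n))).filter
      (fun F => edgeCount F = e ∧ (supp F).card ≤ r)).card :=
    Finset.card_image_of_injective _ (fun _ _ h => ES_inj h)
  rw [← h1]
  have hsub : (((univ : Finset (SimpleGraph (Fin n))).filter
      (fun F => edgeCount F = e ∧ (supp F).card ≤ r)).image ES) ⊆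
      ((univ : Finset (Finset (Fin n))).filter (fun S => S.card ≤ r)).biUnion
        (fun S => S.sym2.powersetCard e) := by
    intro E hE
    rw [Finset.mem_image] at hE
    obtain ⟨F, hF, rfl⟩ := hE
    simp only [Finset.mem_filter, Finset.mem_univ, true_and] at hF
    rw [Finset.mem_biUnion]
    refine ⟨supp F, by simpa using hF.2, ?_⟩
    rw [Finset.mem_powersetCard]
    refine ⟨?_, hF.1⟩
    intro x hx
    rw [mem_ES] at hx
    induction x with
    | _ a b =>
      rw [SimpleGraph.mem_edgeSet] at hx
      simp [supp]
      exact ⟨⟨b, hx⟩, ⟨a, hx.symm⟩⟩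
  refine (Finset.card_le_card hsub).trans (Finset.card_biUnion_le.trans ?_)
  refine (Finset.sum_le_card_nsmul _ _ ((r ^ 2).choose e) ?_).trans ?_
  · intro S hS
    simp only [Finset.mem_filter, Finset.mem_univ, true_and] at hS
    rw [Finset.card_powersetCard, Finset.card_sym2]
    apply Nat.choose_le_choose
    rw [Nat.choose_two_right]
    apply Nat.div_le_of_le_mul
    simp only [Nat.add_sub_cancel]
    rcases Nat.eq_zero_or_pos S.card with h | h
    · rw [h]; simp
    · nlinarith
  · rw [smul_eq_mul]
    exact Nat.mul_le_mul_right _ (card_small_sets n r)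

lemma choose_le_exp (N e : ℕ) (he : 0 < e) : (N.choose e : ℝ) ≤ (3 * N / e) ^ e := by
  have h1 : (N.choose e : ℝ) ≤ N ^ e / e.factorial := Nat.choose_le_pow_div e N
  have h2 : (e : ℝ) ^ e / e.factorial ≤ Real.exp e :=
    Real.pow_div_factorial_le_exp _ (by positivity) e
  have h3 : Real.exp e ≤ 3 ^ e := by
    rw [← mul_one (e : ℝ), Real.exp_nat_mul]
    have := Real.exp_one_lt_d9
    gcongr
    linarith
  have he' : (0 : ℝ) < e := by exact_mod_cast he
  have hf : (0 : ℝ) < e.factorial := by exact_mod_cast Nat.factorial_pos e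
  refine h1.trans ?_
  rw [div_pow, mul_pow, div_le_div_iff₀ hf (by positivity)]
  have h4 : (e : ℝ) ^ e ≤ 3 ^ e * e.factorial := by
    rw [div_le_iff₀ hf] at h2
    exact h2.trans (by gcongr)
  calc (N : ℝ) ^ e * e ^ e ≤ N ^ e * (3 ^ e * e.factorial) := by gcongr
    _ = _ := by ring

lemma card_cores (n e : ℕ) (τ : ℝ) (hτ : 0 < τ) (he : 0 < e) :
    (((univ : Finset (SimpleGraph (Fin n))).filter
      (fun F => edgeCount F = e ∧ τ * (supp F).card ≤ 2 * e)).card : ℝ) ≤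
      (((n : ℝ) + 1) ^ (2 / τ) * (12 * e / τ ^ 2)) ^ e := by
  set r := ⌊2 * e / τ⌋₊ with hr
  have hr1 : (r : ℝ) ≤ 2 * e / τ := Nat.floor_le (by positivity)
  have hsub : ((univ : Finset (SimpleGraph (Fin n))).filter
      (fun F => edgeCount F = e ∧ τ * (supp F).card ≤ 2 * e)) ⊆
      ((univ : Finset (SimpleGraph (Fin n))).filter
      (fun F => edgeCount F = e ∧ (supp F).card ≤ r)) := by
    intro F hF
    simp only [Finset.mem_filter, Finset.mem_univ, true_and] at hF ⊢
    refine ⟨hF.1, Nat.le_floor ?_⟩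
    rw [le_div_iff₀ hτ]; linarith [hF.2]
  have h1 : (((univ : Finset (SimpleGraph (Fin n))).filter
      (fun F => edgeCount F = e ∧ τ * (supp F).card ≤ 2 * e)).card : ℝ) ≤
      ((n : ℝ) + 1) ^ r * ((r ^ 2).choose e : ℕ) := by
    exact_mod_cast (Finset.card_le_card hsub).trans (card_graphs n r e)
  refine h1.trans ?_
  have he' : (0 : ℝ) < e := by exact_mod_cast he
  rw [mul_pow]
  apply mul_le_mul _ _ (by positivity) (by positivity)
  · rw [← Real.rpow_natCast, ← Real.rpow_natCast, ← Real.rpow_mul (by positivity)]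
    apply Real.rpow_le_rpow_of_exponent_le
    · linarith [(Nat.cast_nonneg n : (0 : ℝ) ≤ n)]
    · calc (r : ℝ) ≤ _ := hr1
        _ = _ := by ring
  · refine (choose_le_exp _ e he).trans ?_
    apply pow_le_pow_left₀ (by positivity)
    push_cast
    have : (r : ℝ) ^ 2 ≤ (2 * e / τ) ^ 2 := by gcongr
    calc 3 * (r : ℝ) ^ 2 / e ≤ 3 * (2 * e / τ) ^ 2 / e := by gcongr
      _ = _ := by field_simp; ring

lemma tri_edge {V : Type*} [Fintype V] (G : SimpleGraph V) :
    (6 * triangleCount G : ℝ) ^ 2 ≤ (2 * edgeCount G) ^ 3 := by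
  set a : V → V → ℝ := fun x y => if G.Adj x y then 1 else 0 with ha
  have hsymm : ∀ x y, a x y = a y x := by intro x y; simp [a, G.adj_comm]
  have hsq : ∀ x y, a x y ^ 2 = a x y := by intro x y; simp [a]
  have hE : ∑ x, ∑ y, a x y = 2 * edgeCount G := by
    have : ∑ v, (deg G v : ℝ) = 2 * edgeCount G := by exact_mod_cast sum_deg G
    rw [← this]
    apply Finset.sum_congr rfl
    intro v _
    simp [a, deg]
  have hT : (6 * triangleCount G : ℝ) ≤ ∑ x, ∑ y, a x y * ∑ z, a y z * a z x := by
    set O := (univ : Finset (V × V × V)).filter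
      (fun q => G.Adj q.1 q.2.1 ∧ G.Adj q.2.1 q.2.2 ∧ G.Adj q.2.2 q.1) with hO
    have h1 : ∑ x, ∑ y, a x y * ∑ z, a y z * a z x = (O.card : ℝ) := by
      rw [hO, Finset.card_filter]
      push_cast
      rw [Fintype.sum_prod_type]
      apply Finset.sum_congr rfl
      intro x _
      rw [Fintype.sum_prod_type]
      apply Finset.sum_congr rfl
      intro y _
      rw [Finset.mul_sum]
      apply Finset.sum_congr rfl
      intro z _
      simp only [a]
      by_cases h1 : G.Adj x y <;> by_cases h2 : G.Adj y z <;> by_cases h3 : G.Adj z x <;>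
        simp [h1, h2, h3]
    rw [h1]
    have h2 : 6 * triangleCount G ≤ O.card := by
      have hmaps : ∀ q ∈ O, ({q.1, q.2.1, q.2.2} : Finset V) ∈
          (univ : Finset (Finset V)).filter (fun s => G.IsNClique 3 s) := by
        intro q hq
        simp only [hO, Finset.mem_filter, Finset.mem_univ, true_and] at hq ⊢
        rw [SimpleGraph.is3Clique_triple_iff]
        exact ⟨hq.1, hq.2.2.symm, hq.2.1⟩
      rw [Finset.card_eq_sum_card_fiberwise hmaps]
      unfold triangleCount
      rw [mul_comm, ← smul_eq_mul]
      apply Finset.card_nsmul_le_sum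
      intro s hs
      simp only [Finset.mem_filter, Finset.mem_univ, true_and] at hs
      rw [SimpleGraph.is3Clique_iff] at hs
      obtain ⟨x, y, z, hxy, hxz, hyz, rfl⟩ := hs
      have n1 := hxy.ne
      have n2 := hxz.ne
      have n3 := hyz.ne
      have hss : ({(x, y, z), (x, z, y), (y, x, z), (y, z, x), (z, x, y), (z, y, x)} :
          Finset (V × V × V)) ⊆ O.filter (fun q => ({q.1, q.2.1, q.2.2} : Finset V) = {x, y, z}) := by
        intro q hq
        simp only [Finset.mem_insert, Finset.mem_singleton] at hq
        rcases hq with rfl | rfl | rfl | rfl | rfl | rfl <;>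
          simp only [hO, Finset.mem_filter, Finset.mem_univ, true_and] <;>
          refine ⟨⟨?_, ?_, ?_⟩, ?_⟩ <;>
          first
          | assumption
          | exact hxy.symm
          | exact hxz.symm
          | exact hyz.symm
          | rfl
          | trivial
          | (ext w; simp; done)
          | (ext w; simp; tauto)
      refine le_trans (le_of_eq ?_) (Finset.card_le_card hss)
      rw [Finset.card_insert_of_notMem, Finset.card_insert_of_notMem,
        Finset.card_insert_of_notMem, Finset.card_insert_of_notMem,
        Finset.card_insert_of_notMem, Finset.card_singleton] <;>
        simp [n1, n2, n3, n1.symm, n2.symm, n3.symm]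
    exact_mod_cast h2
  have hS : (0 : ℝ) ≤ 6 * triangleCount G := by positivity
  have hcs : ∀ x y, (∑ z, a y z * a z x) ^ 2 ≤ (∑ z, a y z) * ∑ z, a x z := by
    intro x y
    have := Finset.sum_mul_sq_le_sq_mul_sq univ (fun z => a y z) (fun z => a z x)
    simp only [hsq] at this
    simp only [hsymm x]
    exact this
  have hcs2 : (∑ x, ∑ y, a x y * ∑ z, a y z * a z x) ^ 2 ≤
      (∑ x, ∑ y, a x y) * ∑ x, ∑ y, (∑ z, a y z * a z x) ^ 2 := by
    have := Finset.sum_mul_sq_le_sq_mul_sq (univ : Finset (V × V)) (fun q => a q.1 q.2)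
      (fun q => ∑ z, a q.2 z * a z q.1)
    simp only [hsq, Fintype.sum_prod_type] at this
    exact this
  have h5 : ∑ x, ∑ y, (∑ z, a y z * a z x) ^ 2 ≤ (2 * edgeCount G : ℝ) * (2 * edgeCount G) := by
    calc ∑ x, ∑ y, (∑ z, a y z * a z x) ^ 2 ≤ ∑ x, ∑ y, (∑ z, a y z) * ∑ z, a x z :=
          Finset.sum_le_sum fun x _ => Finset.sum_le_sum fun y _ => hcs x y
      _ = (∑ x, ∑ z, a x z) * ∑ y, ∑ z, a y z := by
          rw [Finset.sum_mul]
          apply Finset.sum_congr rfl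
          intro x _
          rw [← Finset.sum_mul, mul_comm]
      _ = _ := by rw [hE]
  rw [hE] at hcs2
  calc (6 * triangleCount G : ℝ) ^ 2 ≤ _ := pow_le_pow_left₀ hS hT 2
    _ ≤ _ := hcs2
    _ ≤ 2 * edgeCount G * ((2 * edgeCount G : ℝ) * (2 * edgeCount G)) := by gcongr
    _ = _ := by ring

lemma edgeCount_le_sq (n : ℕ) (F : SimpleGraph (Fin n)) : edgeCount F ≤ n ^ 2 := by
  rw [edgeCount_eq]
  refine (Finset.card_le_card (ES_mono.2 (le_top : F ≤ ⊤))).trans ?_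
  rw [ES_top_card]
  exact Nat.choose_le_pow n 2

lemma edge_lower {V : Type*} [Fintype V] (F : SimpleGraph V) (x : ℝ) (hx : 0 ≤ x)
    (h : x ≤ triangleCount F) : (6 * x) ^ ((2 : ℝ) / 3) / 2 ≤ edgeCount F := by
  have h1 := tri_edge F
  have h2 : (6 * x) ^ 2 ≤ (2 * edgeCount F : ℝ) ^ 3 := by
    refine le_trans ?_ h1
    gcongr
  have h3 : (6 * x) ^ ((2 : ℝ) / 3) = ((6 * x) ^ 2) ^ ((1 : ℝ) / 3) := by
    rw [← Real.rpow_natCast, ← Real.rpow_mul (by positivity)]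
    norm_num
  have h4 : ((2 * edgeCount F : ℝ) ^ 3) ^ ((1 : ℝ) / 3) = 2 * edgeCount F := by
    rw [← Real.rpow_natCast, ← Real.rpow_mul (by positivity)]
    norm_num
  have h5 : (6 * x) ^ ((2 : ℝ) / 3) ≤ 2 * edgeCount F := by
    rw [h3, ← h4]
    exact Real.rpow_le_rpow (by positivity) h2 (by norm_num)
  linarith

lemma prob_upper (n : ℕ) (p : ℝ) (hp : 0 < p) (hp1 : p ≤ 1) (r : ℕ) (hr : 0 < r) (ε k τ q : ℝ)
    (hε : 0 < ε) (hε2 : 2 * ε < 1) (hk : 0 < k) (hτ : τ = ε * k / (3 * r))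
    (hq : q = ((n : ℝ) + 1) ^ (2 / τ) * (12 * (3 * r) / τ ^ 2) * p) (hq1 : q ≤ 1) :
    prob n p {G | k ≤ (triangleCount G : ℝ)} ≤
      (((1 - ε) * k + p * (n * (3 * r : ℕ)) + p ^ 3 * n ^ 3) / k) ^ r +
      (n ^ 2 + 1) * q ^ ((6 * ((1 - 2 * ε) * k)) ^ ((2 : ℝ) / 3) / 2) := by
  have hr' : (0 : ℝ) < r := by exact_mod_cast hr
  have hτ0 : 0 < τ := by rw [hτ]; positivity
  have hq0 : 0 < q := by rw [hq]; positivity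
  have hx : 0 < (1 - 2 * ε) * k := mul_pos (by linarith) hk
  set m0 := (6 * ((1 - 2 * ε) * k)) ^ ((2 : ℝ) / 3) / 2 with hm0
  have hm0pos : 0 < m0 := by positivity
  set C := (univ : Finset (SimpleGraph (Fin n))).filter (fun F => edgeCount F ≤ 3 * r ∧
    τ * (supp F).card ≤ 2 * edgeCount F ∧ (1 - 2 * ε) * k ≤ triangleCount F) with hC
  have hsub : {G : SimpleGraph (Fin n) | k ≤ (triangleCount G : ℝ)} ⊆
      ({G | k ≤ (triangleCount G : ℝ)} ∩ NS n (3 * r) ((1 - ε) * k)) ∪ {G | ∃ F ∈ C, F ≤ G} := by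
    intro G hG
    by_cases h : G ∈ NS n (3 * r) ((1 - ε) * k)
    · exact Or.inl ⟨hG, h⟩
    · right
      simp only [NS, Set.mem_ofPred_eq, not_forall, not_lt] at h
      obtain ⟨F, hFG, hFe, hFT⟩ := h
      obtain ⟨F', hF', h1, h2⟩ := exists_core F τ
      refine ⟨F', ?_, hF'.trans hFG⟩
      rw [hC, Finset.mem_filter]
      refine ⟨Finset.mem_univ _, ?_, supp_card F' τ h2, ?_⟩
      · refine le_trans ?_ hFe
        exact Finset.card_le_card (ES_mono.2 hF')
      · have h3 : (edgeCount F : ℝ) ≤ 3 * r := by exact_mod_cast hFe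
        have h4 : τ * edgeCount F ≤ ε * k := by
          calc τ * edgeCount F ≤ τ * (3 * r) := by gcongr
            _ = ε * k := by rw [hτ]; field_simp
        have h5 : 0 ≤ τ * edgeCount F' := by positivity
        linarith
  refine (prob_mono hp.le hp1 hsub).trans ((prob_union_le hp.le hp1 _ _).trans ?_)
  refine add_le_add ?_ ?_
  · exact prob_no_seed n p hp.le hp1 r _ k (mul_nonneg (by linarith) hk.le) hk
  refine (prob_biUnion_le hp.le hp1 C).trans ?_
  rw [← Finset.sum_fiberwise_of_maps_to (s := C) (t := Finset.range (n ^ 2 + 1))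
    (g := fun F => edgeCount F)
    (fun F _ => Finset.mem_range.2 (Nat.lt_succ_of_le (edgeCount_le_sq n F)))]
  have hfib : ∀ e ∈ Finset.range (n ^ 2 + 1),
      ∑ F ∈ C.filter (fun F => edgeCount F = e), p ^ edgeCount F ≤ q ^ m0 := by
    intro e _
    by_cases hne : (C.filter (fun F => edgeCount F = e)).Nonempty
    · obtain ⟨F, hF⟩ := hne
      rw [Finset.mem_filter, hC, Finset.mem_filter] at hF
      obtain ⟨⟨_, hF1, hF2, hF3⟩, hFe⟩ := hF
      have hme : m0 ≤ e := by
        rw [← hFe]; exact edge_lower F _ hx.le hF3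
      have he0 : 0 < e := by
        have : (0 : ℝ) < e := lt_of_lt_of_le hm0pos hme
        exact_mod_cast this
      have her : (e : ℝ) ≤ 3 * r := by rw [hFe] at hF1; exact_mod_cast hF1
      have hs1 : ∑ F ∈ C.filter (fun F => edgeCount F = e), p ^ edgeCount F =
          (C.filter (fun F => edgeCount F = e)).card * p ^ e := by
        rw [Finset.sum_congr rfl (g := fun _ => p ^ e), Finset.sum_const, nsmul_eq_mul]
        intro F hF
        rw [(Finset.mem_filter.1 hF).2]
      have hs2 : ((C.filter (fun F => edgeCount F = e)).card : ℝ) ≤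
          (((n : ℝ) + 1) ^ (2 / τ) * (12 * e / τ ^ 2)) ^ e := by
        refine le_trans ?_ (card_cores n e τ hτ0 he0)
        have : C.filter (fun F => edgeCount F = e) ⊆
            (univ : Finset (SimpleGraph (Fin n))).filter
              (fun F => edgeCount F = e ∧ τ * (supp F).card ≤ 2 * e) := by
          intro F hF
          rw [Finset.mem_filter, hC, Finset.mem_filter] at hF
          obtain ⟨⟨_, hF1, hF2, hF3⟩, hFe⟩ := hF
          rw [Finset.mem_filter]
          refine ⟨Finset.mem_univ _, hFe, ?_⟩
          rw [hFe] at hF2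
          exact hF2
        exact_mod_cast Finset.card_le_card this
      rw [hs1]
      calc ((C.filter (fun F => edgeCount F = e)).card : ℝ) * p ^ e
          ≤ (((n : ℝ) + 1) ^ (2 / τ) * (12 * e / τ ^ 2)) ^ e * p ^ e := by gcongr
        _ ≤ (((n : ℝ) + 1) ^ (2 / τ) * (12 * (3 * r) / τ ^ 2)) ^ e * p ^ e := by gcongr
        _ = q ^ (e : ℝ) := by rw [← mul_pow, hq, Real.rpow_natCast]
        _ ≤ q ^ m0 := Real.rpow_le_rpow_of_exponent_ge hq0 hq1 hme
    · rw [Finset.not_nonempty_iff_eq_empty] at hne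
      rw [hne, Finset.sum_empty]
      positivity
  refine (Finset.sum_le_sum hfib).trans ?_
  rw [Finset.sum_const, Finset.card_range, nsmul_eq_mul]
  push_cast
  exact le_rfl

lemma prob_lower (n : ℕ) (p : ℝ) (hp : 0 < p) (hp1 : p ≤ 1) (s : ℕ) (hs : s ≤ n) (k : ℝ)
    (hk : k ≤ (s.choose 3 : ℕ)) :
    p ^ (s.choose 2) ≤ prob n p {G | k ≤ (triangleCount G : ℝ)} := by
  obtain ⟨t, _, ht⟩ := Finset.exists_subset_card_eq (s := (univ : Finset (Fin n))) (n := s)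
    (by simpa using hs)
  rw [← ht, ← KG_card, ← prob_ge]
  apply prob_mono hp.le hp1
  intro G hG
  refine hk.trans ?_
  rw [triangleCount_TS, ← ht, ← Finset.card_powersetCard]
  norm_cast
  apply Finset.card_le_card
  intro x hx
  rw [Finset.mem_powersetCard] at hx
  rw [mem_TS]
  refine ⟨?_, hx.2⟩
  have : G.IsClique (t : Set (Fin n)) := (KG_le t G).1 hG
  exact this.subset (by exact_mod_cast hx.1)

lemma c0_le : (6 : ℝ) ^ ((2 : ℝ) / 3) / 2 ≤ 2 := by
  have h : (6 : ℝ) ^ ((2 : ℝ) / 3) ≤ 8 ^ ((2 : ℝ) / 3) :=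
    Real.rpow_le_rpow (by norm_num) (by norm_num) (by norm_num)
  have h8 : (8 : ℝ) ^ ((2 : ℝ) / 3) = 4 := by
    rw [show (8 : ℝ) = 2 ^ (3 : ℝ) by norm_num, ← Real.rpow_mul (by norm_num)]
    norm_num
  linarith

lemma cube_rpow (K : ℝ) (hK : 0 ≤ K) : (K ^ 3) ^ ((2 : ℝ) / 3) = K ^ 2 := by
  rw [← Real.rpow_natCast, ← Real.rpow_mul hK, ← Real.rpow_natCast]
  norm_num

lemma m0_lower (ε K : ℝ) (hε : 0 < ε) (hε3 : 3 * ε < 1) (hK : 0 ≤ K) :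
    (1 - 2 * ε) * ((6 : ℝ) ^ ((2 : ℝ) / 3) / 2) * K ^ 2 ≤
      (6 * ((1 - 2 * ε) * K ^ 3)) ^ ((2 : ℝ) / 3) / 2 := by
  have h0 : 0 ≤ 1 - 2 * ε := by linarith
  rw [Real.mul_rpow (by norm_num) (by positivity), Real.mul_rpow h0 (by positivity),
    cube_rpow K hK]
  have h1 : (1 - 2 * ε) ≤ (1 - 2 * ε) ^ ((2 : ℝ) / 3) := by
    have := Real.rpow_le_rpow_of_exponent_ge (x := 1 - 2 * ε) (by linarith) (by linarith)
      (show (2 : ℝ) / 3 ≤ 1 by norm_num)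
    simpa using this
  have h2 : (0 : ℝ) ≤ 6 ^ ((2 : ℝ) / 3) / 2 * K ^ 2 := by positivity
  nlinarith [mul_le_mul_of_nonneg_right h1 h2]

set_option maxHeartbeats 2000000 in
lemma upper_det (n : ℕ) (l ε K L : ℝ) (hl : 0 < l) (hε : 0 < ε) (hε3 : 3 * ε < 1)
    (hL1 : 1 ≤ L) (hK1 : 1 ≤ K) (hn : 2 ≤ n) (hln : l ≤ n) (hL : L = Real.log (1 / (l / n)))
    (ha : 24 * l / ε * L / K + l ^ 3 / K ^ 3 ≤ ε / 2)
    (hb : 96 * Real.log n / (ε ^ 2 * K) ≤ ε / 2)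
    (hc : 165888 / ε ^ 5 * L ^ 3 ≤ Real.exp (ε / 2 * L))
    (hd : Real.log (n ^ 2 + 2) ≤ ε * K ^ 2 * L) :
    prob n (l / n) {G | K ^ 3 ≤ (triangleCount G : ℝ)} ≤
      Real.exp (-(((1 - 3 * ε) * ((6 : ℝ) ^ ((2 : ℝ) / 3) / 2) - ε) * (K ^ 2 * L))) := by
  have hK0 : 0 < K := by linarith
  have hL0 : 0 < L := by linarith
  have hn0 : (0 : ℝ) < n := by exact_mod_cast (by omega : 0 < n)
  have hn2 : (2 : ℝ) ≤ n := by exact_mod_cast hn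
  set p := l / n with hp
  have hp0 : 0 < p := by positivity
  have hp1 : p ≤ 1 := by rw [hp, div_le_one hn0]; exact hln
  have hpL : p = Real.exp (-L) := by
    rw [hL, one_div, Real.log_inv, neg_neg, Real.exp_log hp0]
  have hpn : p * n = l := by rw [hp]; field_simp
  set c0 := (6 : ℝ) ^ ((2 : ℝ) / 3) / 2 with hc0
  have hc0pos : 0 < c0 := by positivity
  have hc02 : c0 ≤ 2 := c0_le
  have hKL : 1 ≤ K ^ 2 * L := by nlinarith
  set r := ⌈4 / ε * K ^ 2 * L⌉₊ with hr
  have hbase : 1 ≤ 4 / ε * K ^ 2 * L := by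
    have : 1 ≤ 4 / ε := by rw [le_div_iff₀ hε]; linarith
    rw [mul_assoc]; nlinarith
  have hr1 : 4 / ε * K ^ 2 * L ≤ r := Nat.le_ceil _
  have hr2 : (r : ℝ) ≤ 8 / ε * K ^ 2 * L := by
    have := (Nat.ceil_lt_add_one (a := 4 / ε * K ^ 2 * L) (by linarith)).le
    have e : 8 / ε * K ^ 2 * L = 4 / ε * K ^ 2 * L + 4 / ε * K ^ 2 * L := by ring
    rw [e]; linarith
  have hr0' : (0 : ℝ) < r := by linarith
  have hr0 : 0 < r := by exact_mod_cast hr0'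
  set τ := ε * K ^ 3 / (3 * r) with hτ
  have hτ0 : 0 < τ := by positivity
  have hτi : 1 / τ ≤ 24 * L / (ε ^ 2 * K) := by
    rw [hτ, one_div_div, div_le_div_iff₀ (by positivity) (by positivity)]
    calc 3 * (r : ℝ) * (ε ^ 2 * K) ≤ 3 * (8 / ε * K ^ 2 * L) * (ε ^ 2 * K) := by gcongr
      _ = 24 * L * (ε * K ^ 3) := by field_simp; ring
  set q := ((n : ℝ) + 1) ^ (2 / τ) * (12 * (3 * r) / τ ^ 2) * p with hq
  have hq0 : 0 < q := by positivity
  have hqa : ((n : ℝ) + 1) ^ (2 / τ) ≤ Real.exp (ε / 2 * L) := by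
    rw [Real.rpow_def_of_pos (by positivity)]
    apply Real.exp_le_exp.2
    have h1 : Real.log ((n : ℝ) + 1) ≤ 2 * Real.log n := by
      have : 2 * Real.log n = Real.log ((n : ℝ) ^ 2) := by rw [Real.log_pow]; norm_num
      rw [this]
      apply Real.log_le_log (by positivity)
      nlinarith
    have h0 : 0 ≤ Real.log n := Real.log_nonneg (by linarith)
    calc Real.log ((n : ℝ) + 1) * (2 / τ) = Real.log ((n : ℝ) + 1) * 2 * (1 / τ) := by ring
      _ ≤ (2 * Real.log n) * 2 * (24 * L / (ε ^ 2 * K)) := by gcongr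
      _ = 96 * Real.log n / (ε ^ 2 * K) * L := by ring
      _ ≤ ε / 2 * L := by gcongr
  have hqb : 12 * (3 * r) / τ ^ 2 ≤ Real.exp (ε / 2 * L) := by
    refine le_trans ?_ hc
    calc 12 * (3 * (r : ℝ)) / τ ^ 2 = 36 * r * (1 / τ) ^ 2 := by ring
      _ ≤ 36 * (8 / ε * K ^ 2 * L) * (24 * L / (ε ^ 2 * K)) ^ 2 := by gcongr
      _ = 165888 / ε ^ 5 * L ^ 3 := by field_simp; norm_num
  have hqe : q ≤ Real.exp (-((1 - ε) * L)) := by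
    calc q ≤ Real.exp (ε / 2 * L) * Real.exp (ε / 2 * L) * Real.exp (-L) := by
          rw [hq, hpL]; gcongr
      _ = _ := by rw [← Real.exp_add, ← Real.exp_add]; congr 1; ring
  have hq1 : q ≤ 1 := by
    refine hqe.trans ?_
    rw [Real.exp_le_one_iff]
    nlinarith
  have main := prob_upper n p hp0 hp1 r hr0 ε (K ^ 3) τ q hε (by linarith) (by positivity) hτ hq hq1
  refine main.trans ?_
  have hA : (((1 - ε) * K ^ 3 + p * (n * (3 * r : ℕ)) + p ^ 3 * n ^ 3) / K ^ 3) ^ r ≤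
      Real.exp (-((1 - 3 * ε) * c0 * (K ^ 2 * L))) := by
    have h1 : ((1 - ε) * K ^ 3 + p * (n * (3 * r : ℕ)) + p ^ 3 * n ^ 3) / K ^ 3 ≤
        Real.exp (-(ε / 2)) := by
      have h2 : ((1 - ε) * K ^ 3 + p * (n * (3 * r : ℕ)) + p ^ 3 * n ^ 3) / K ^ 3 =
          (1 - ε) + (3 * l * r / K ^ 3 + l ^ 3 / K ^ 3) := by
        rw [← hpn]; push_cast; field_simp; ring
      have h3 : 3 * l * r / K ^ 3 ≤ 24 * l / ε * L / K := by
        calc 3 * l * r / K ^ 3 ≤ 3 * l * (8 / ε * K ^ 2 * L) / K ^ 3 := by gcongr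
          _ = _ := by field_simp; ring
      have h4 := Real.add_one_le_exp (-(ε / 2))
      rw [h2]; linarith
    have h0 : 0 ≤ ((1 - ε) * K ^ 3 + p * (n * (3 * r : ℕ)) + p ^ 3 * n ^ 3) / K ^ 3 := by
      have : 0 ≤ 1 - ε := by linarith
      positivity
    refine (pow_le_pow_left₀ h0 h1 r).trans ?_
    rw [← Real.exp_nat_mul]
    apply Real.exp_le_exp.2
    have h5 : 2 * (K ^ 2 * L) ≤ r * (ε / 2) := by
      calc 2 * (K ^ 2 * L) = (4 / ε * K ^ 2 * L) * (ε / 2) := by field_simp; ring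
        _ ≤ _ := by gcongr
    have h6 : (1 - 3 * ε) * c0 ≤ 2 := by
      have : (1 - 3 * ε) * c0 ≤ 1 * c0 := mul_le_mul_of_nonneg_right (by linarith) hc0pos.le
      linarith
    have h7 := mul_le_mul_of_nonneg_right h6 (by linarith : 0 ≤ K ^ 2 * L)
    linarith
  have hB : q ^ ((6 * ((1 - 2 * ε) * K ^ 3)) ^ ((2 : ℝ) / 3) / 2) ≤
      Real.exp (-((1 - 3 * ε) * c0 * (K ^ 2 * L))) := by
    have h1 := m0_lower ε K hε hε3 hK0.le
    rw [← hc0] at h1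
    calc q ^ ((6 * ((1 - 2 * ε) * K ^ 3)) ^ ((2 : ℝ) / 3) / 2)
        ≤ q ^ ((1 - 2 * ε) * c0 * K ^ 2) := Real.rpow_le_rpow_of_exponent_ge hq0 hq1 h1
      _ ≤ Real.exp (-((1 - ε) * L)) ^ ((1 - 2 * ε) * c0 * K ^ 2) := by
          apply Real.rpow_le_rpow hq0.le hqe
          have : 0 ≤ 1 - 2 * ε := by linarith
          positivity
      _ ≤ _ := by
          rw [← Real.exp_mul]
          apply Real.exp_le_exp.2
          have h2 : (1 - 3 * ε) ≤ (1 - ε) * (1 - 2 * ε) := by nlinarith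
          have h3 : 0 ≤ c0 * (K ^ 2 * L) := by positivity
          nlinarith [mul_le_mul_of_nonneg_right h2 h3]
  have hE := Real.exp_pos (-((1 - 3 * ε) * c0 * (K ^ 2 * L)))
  calc _ ≤ Real.exp (-((1 - 3 * ε) * c0 * (K ^ 2 * L))) +
        (n ^ 2 + 1) * Real.exp (-((1 - 3 * ε) * c0 * (K ^ 2 * L))) := by gcongr
    _ = Real.exp (Real.log (n ^ 2 + 2)) * Real.exp (-((1 - 3 * ε) * c0 * (K ^ 2 * L))) := by
        rw [Real.exp_log (by positivity)]; ring
    _ ≤ Real.exp (ε * K ^ 2 * L) * Real.exp (-((1 - 3 * ε) * c0 * (K ^ 2 * L))) := by gcongr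
    _ = _ := by rw [← Real.exp_add]; congr 1; ring

lemma lower_det (n : ℕ) (l K L : ℝ) (hl : 0 < l)
    (hK1 : 1 ≤ K) (hL0 : 0 ≤ L) (hn : 2 ≤ n) (hln : l ≤ n) (hL : L = Real.log (1 / (l / n)))
    (hs : (6 : ℝ) ^ ((1 : ℝ) / 3) * K + 3 ≤ n) :
    Real.exp (-(((6 : ℝ) ^ ((1 : ℝ) / 3) * K + 3) ^ 2 / 2 * L)) ≤
    prob n (l / n) {G | K ^ 3 ≤ (triangleCount G : ℝ)} := by
  have hn0 : (0 : ℝ) < n := by exact_mod_cast (by omega : 0 < n)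
  set p := l / n with hp
  have hp0 : 0 < p := by positivity
  have hp1 : p ≤ 1 := by rw [hp, div_le_one hn0]; exact hln
  have hpL : p = Real.exp (-L) := by
    rw [hL, one_div, Real.log_inv, neg_neg, Real.exp_log hp0]
  set b := (6 : ℝ) ^ ((1 : ℝ) / 3) with hb
  have hb0 : 0 < b := by positivity
  have hb3 : b ^ 3 = 6 := by
    rw [hb, ← Real.rpow_natCast, ← Real.rpow_mul (by norm_num)]; norm_num
  set m := ⌈b * K⌉₊ with hm
  have hm1 : b * K ≤ m := Nat.le_ceil _
  have hm2 : (m : ℝ) ≤ b * K + 1 := (Nat.ceil_lt_add_one (by positivity)).le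
  have hmn : m + 2 ≤ n := by
    have : ((m + 2 : ℕ) : ℝ) ≤ n := by push_cast; linarith
    exact_mod_cast this
  have hch : K ^ 3 ≤ ((m + 2).choose 3 : ℕ) := by
    have h1 : 6 * ((m + 2).choose 3) = (m + 2) * (m + 1) * m := by
      have := Nat.descFactorial_eq_factorial_mul_choose (m + 2) 3
      simp [Nat.descFactorial_succ, Nat.factorial] at this
      rw [← this]; ring
    have h2 : 6 * (((m + 2).choose 3 : ℕ) : ℝ) = (m + 2) * (m + 1) * m := by exact_mod_cast h1
    have h3 : (b * K) ^ 3 ≤ (m : ℝ) ^ 3 := by gcongr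
    rw [mul_pow, hb3] at h3
    have h4 : (m : ℝ) ^ 3 ≤ (m + 2) * (m + 1) * m := by
      have : (0 : ℝ) ≤ m := by positivity
      nlinarith [mul_nonneg this this]
    linarith
  have main := prob_lower n p hp0 hp1 (m + 2) hmn (K ^ 3) hch
  refine le_trans ?_ main
  rw [hpL, ← Real.exp_nat_mul]
  apply Real.exp_le_exp.2
  have hc : (((m + 2).choose 2 : ℕ) : ℝ) ≤ (b * K + 3) ^ 2 / 2 := by
    have h1 : (((m + 2).choose 2 : ℕ) : ℝ) ≤ (m + 2 : ℕ) ^ 2 / (2 : ℕ).factorial :=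
      Nat.choose_le_pow_div 2 (m + 2)
    refine h1.trans ?_
    push_cast [Nat.factorial]
    have : (m : ℝ) + 2 ≤ b * K + 3 := by linarith
    gcongr
  have := mul_le_mul_of_nonneg_right hc hL0
  linarith

/-- **Large deviations for the number of triangles, limit form.**
Fix `λ > 0`, `p_n = λ/n`. If `(log n)/k_n^{1/3} → 0` and `k_n/n³ → 0`, then
`log P(T ≥ k_n) / (k_n^{2/3} log(1/p_n)) → −6^{2/3}/2`. -/
theorem triangle_tail_limit (l : ℝ) (hl : 0 < l) (k : ℕ → ℝ) (hk : ∀ n, 0 < k n)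
    (h1 : Tendsto (fun n : ℕ => Real.log n / (k n) ^ ((1 : ℝ) / 3)) atTop (nhds 0))
    (h2 : Tendsto (fun n : ℕ => k n / (n : ℝ) ^ 3) atTop (nhds 0)) :
    Tendsto (fun n : ℕ =>
        Real.log (prob n (l / n) {G | k n ≤ (triangleCount G : ℝ)}) /
          ((k n) ^ ((2 : ℝ) / 3) * Real.log (1 / (l / n))))
      atTop (nhds (-(6 ^ ((2 : ℝ) / 3)) / 2)) := by
  obtain ⟨K, hKdef⟩ : ∃ K : ℕ → ℝ, K = fun n => (k n) ^ ((1 : ℝ) / 3) := ⟨_, rfl⟩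
  have hKpos : ∀ n, 0 < K n := fun n => by rw [hKdef]; exact Real.rpow_pos_of_pos (hk n) _
  have hkK : k = fun n => K n ^ 3 := by
    funext n
    rw [hKdef]
    simp only
    rw [← Real.rpow_natCast, ← Real.rpow_mul (hk n).le]
    norm_num
  have h1' : Tendsto (fun n : ℕ => Real.log n / K n) atTop (nhds 0) := by
    rw [hKdef]; exact h1
  have h2' : Tendsto (fun n : ℕ => K n / n) atTop (nhds 0) := by
    have h := h2.rpow_const (p := (1 : ℝ) / 3) (Or.inr (by norm_num))
    rw [Real.zero_rpow (by norm_num)] at h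
    refine h.congr (fun n => ?_)
    rw [Real.div_rpow (hk n).le (by positivity), hKdef]
    congr 1
    rw [← Real.rpow_natCast, ← Real.rpow_mul (by positivity)]
    norm_num
  clear h1 h2
  obtain ⟨L, hLdef⟩ : ∃ L : ℕ → ℝ, L = fun n : ℕ => Real.log (1 / (l / n)) := ⟨_, rfl⟩
  have hgoal : (fun n : ℕ =>
        Real.log (prob n (l / n) {G | k n ≤ (triangleCount G : ℝ)}) /
          ((k n) ^ ((2 : ℝ) / 3) * Real.log (1 / (l / n)))) =
      fun n : ℕ => Real.log (prob n (l / n) {G | K n ^ 3 ≤ (triangleCount G : ℝ)}) /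
          (K n ^ 2 * L n) := by
    funext n
    rw [hkK, hLdef]
    simp only
    rw [cube_rpow _ (hKpos n).le]
  rw [hgoal]
  clear hgoal hKdef hkK hk
  have hlog : Tendsto (fun n : ℕ => Real.log (n : ℝ)) atTop atTop :=
    Real.tendsto_log_atTop.comp tendsto_natCast_atTop_atTop
  have hK : Tendsto K atTop atTop := by
    apply tendsto_atTop_mono' _ _ hlog
    filter_upwards [h1'.eventually_le_const (zero_lt_one)] with n hn
    rw [div_le_one (hKpos n)] at hn
    exact hn
  have hLeq : ∀ᶠ n : ℕ in atTop, L n = Real.log n - Real.log l := by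
    filter_upwards [eventually_ge_atTop 1] with n hn
    have : (n : ℝ) ≠ 0 := by exact_mod_cast (by omega : n ≠ 0)
    rw [hLdef]
    simp only
    rw [one_div_div, Real.log_div this hl.ne']
  have hLt : Tendsto L atTop atTop := by
    have : Tendsto (fun n : ℕ => Real.log (n : ℝ) - Real.log l) atTop atTop :=
      tendsto_atTop_add_const_right _ _ hlog
    exact this.congr' (hLeq.mono fun n h => h.symm)
  have hLK : Tendsto (fun n => L n / K n) atTop (nhds 0) := by
    have h3 : Tendsto (fun n => Real.log l / K n) atTop (nhds 0) := hK.const_div_atTop _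
    have h4 := h1'.sub h3
    rw [sub_zero] at h4
    refine h4.congr' (hLeq.mono fun n h => ?_)
    change _ = L n / K n
    rw [h]; ring
  have hlogL : ∀ᶠ n : ℕ in atTop, Real.log n ≤ 2 * L n := by
    filter_upwards [hLeq, hlog.eventually_ge_atTop (2 * Real.log l)] with n h h'
    rw [h]; linarith
  have hln : ∀ᶠ n : ℕ in atTop, l ≤ n :=
    tendsto_natCast_atTop_atTop.eventually_ge_atTop l
  have hlow : ∀ᶠ n : ℕ in atTop,
      Real.exp (-(((6 : ℝ) ^ ((1 : ℝ) / 3) * K n + 3) ^ 2 / 2 * L n)) ≤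
        prob n (l / n) {G | K n ^ 3 ≤ (triangleCount G : ℝ)} := by
    filter_upwards [hLt.eventually_ge_atTop 1, hK.eventually_ge_atTop 1, eventually_ge_atTop 6,
      hln, h2'.eventually_le_const (show (0 : ℝ) < 1 / 4 by norm_num)] with n e1 e2 e3 e4 e5
    have hn0 : (6 : ℝ) ≤ n := by exact_mod_cast e3
    apply lower_det n l (K n) (L n) hl e2 (by linarith) (by omega) e4 (by rw [hLdef])
    have hb : (6 : ℝ) ^ ((1 : ℝ) / 3) ≤ 2 := by
      have h : (6 : ℝ) ^ ((1 : ℝ) / 3) ≤ 8 ^ ((1 : ℝ) / 3) :=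
        Real.rpow_le_rpow (by norm_num) (by norm_num) (by norm_num)
      have h8 : (8 : ℝ) ^ ((1 : ℝ) / 3) = 2 := by
        rw [show (8 : ℝ) = 2 ^ (3 : ℝ) by norm_num, ← Real.rpow_mul (by norm_num)]
        norm_num
      linarith
    rw [div_le_iff₀ (by linarith)] at e5
    nlinarith [hKpos n]
  set c0 := (6 : ℝ) ^ ((2 : ℝ) / 3) / 2 with hc0
  have hc02 : c0 ≤ 2 := c0_le
  have hc0pos : 0 < c0 := by positivity
  rw [neg_div, ← hc0]
  rw [tendsto_order]
  constructor
  · intro a ha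
    have hlim : Tendsto (fun n => -(((6 : ℝ) ^ ((1 : ℝ) / 3) + 3 / K n) ^ 2 / 2)) atTop
        (nhds (-c0)) := by
      have h3 : Tendsto (fun n => (3 : ℝ) / K n) atTop (nhds 0) := hK.const_div_atTop _
      have h4 := (((h3.const_add ((6 : ℝ) ^ ((1 : ℝ) / 3))).pow 2).div_const 2).neg
      have h5 : ((6 : ℝ) ^ ((1 : ℝ) / 3) + 0) ^ 2 / 2 = c0 := by
        rw [hc0, add_zero, ← Real.rpow_natCast, ← Real.rpow_mul (by norm_num)]
        norm_num
      rw [h5] at h4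
      exact h4
    filter_upwards [hlim.eventually_const_lt ha, hlow, hLt.eventually_ge_atTop 1] with n e1 e2 e3
    refine lt_of_lt_of_le e1 ?_
    have hKn := hKpos n
    rw [le_div_iff₀ (by positivity)]
    have e4 := Real.log_le_log (Real.exp_pos _) e2
    rw [Real.log_exp] at e4
    refine le_trans (le_of_eq ?_) e4
    field_simp
  · intro a ha
    obtain ⟨ε, hε, hε3, hεa⟩ : ∃ ε : ℝ, 0 < ε ∧ 3 * ε < 1 ∧ 7 * ε < a + c0 := by
      refine ⟨min (1 / 4) ((a + c0) / 8), ?_, ?_, ?_⟩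
      · apply lt_min <;> linarith
      · have := min_le_left (1 / 4) ((a + c0) / 8); linarith
      · have := min_le_right (1 / 4) ((a + c0) / 8); linarith
    have ea : ∀ᶠ n : ℕ in atTop, 24 * l / ε * L n / K n + l ^ 3 / K n ^ 3 ≤ ε / 2 := by
      have t1 := hLK.const_mul (24 * l / ε)
      have t2 : Tendsto (fun n => l ^ 3 / K n ^ 3) atTop (nhds 0) :=
        ((tendsto_pow_atTop (by norm_num)).comp hK).const_div_atTop _
      have t3 := t1.add t2
      rw [mul_zero, add_zero] at t3
      filter_upwards [t3.eventually_le_const (show (0 : ℝ) < ε / 2 by linarith)] with n hn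
      rw [mul_div_assoc]; exact hn
    have eb : ∀ᶠ n : ℕ in atTop, 96 * Real.log n / (ε ^ 2 * K n) ≤ ε / 2 := by
      have t1 := h1'.const_mul (96 / ε ^ 2)
      rw [mul_zero] at t1
      filter_upwards [t1.eventually_le_const (show (0 : ℝ) < ε / 2 by linarith)] with n hn
      rw [mul_div_mul_comm]; exact hn
    have ec : ∀ᶠ n : ℕ in atTop, 165888 / ε ^ 5 * L n ^ 3 ≤ Real.exp (ε / 2 * L n) := by
      have t1 := (isLittleO_pow_exp_pos_mul_atTop 3 (show (0 : ℝ) < ε / 2 by linarith)).def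
        (show (0 : ℝ) < ε ^ 5 / 165888 by positivity)
      filter_upwards [hLt.eventually t1, hLt.eventually_ge_atTop 1] with n hn hn1
      rw [Real.norm_of_nonneg (by positivity), Real.norm_of_nonneg (by positivity)] at hn
      calc 165888 / ε ^ 5 * L n ^ 3
          ≤ 165888 / ε ^ 5 * (ε ^ 5 / 165888 * Real.exp (ε / 2 * L n)) := by gcongr
        _ = _ := by field_simp
    filter_upwards [hLt.eventually_ge_atTop 1, hK.eventually_ge_atTop 1, eventually_ge_atTop 2,
      hln, ea, eb, ec, hlow, hlogL, hK.eventually_ge_atTop (6 / ε)]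
      with n e1 e2 e3 e4 e5 e6 e7 e8 e9 e10
    have hn2 : (2 : ℝ) ≤ n := by exact_mod_cast e3
    have hd : Real.log ((n : ℝ) ^ 2 + 2) ≤ ε * K n ^ 2 * L n := by
      have g1 : Real.log ((n : ℝ) ^ 2 + 2) ≤ 3 * Real.log n := by
        have : 3 * Real.log n = Real.log ((n : ℝ) ^ 3) := by rw [Real.log_pow]; norm_num
        rw [this]
        apply Real.log_le_log (by positivity)
        nlinarith [mul_nonneg (show (0 : ℝ) ≤ n by positivity) (show (0 : ℝ) ≤ n by positivity)]
      have g2 : 6 ≤ ε * K n ^ 2 := by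
        rw [div_le_iff₀ hε] at e10
        have : K n ≤ K n ^ 2 := by nlinarith
        nlinarith
      have g3 := mul_le_mul_of_nonneg_right g2 (by linarith : 0 ≤ L n)
      linarith
    have hup := upper_det n l ε (K n) (L n) hl hε hε3 e1 e2 e3 e4 (by rw [hLdef]) e5 e6 e7 hd
    have hpos := lt_of_lt_of_le (Real.exp_pos _) e8
    have hlogup := Real.log_le_log hpos hup
    rw [Real.log_exp, ← hc0] at hlogup
    have hKn := hKpos n
    have hKL : 0 < K n ^ 2 * L n := by positivity
    rw [div_lt_iff₀ hKL]
    refine lt_of_le_of_lt hlogup ?_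
    rw [← neg_mul]
    apply mul_lt_mul_of_pos_right _ hKL
    have : ε * c0 ≤ ε * 2 := mul_le_mul_of_nonneg_left hc02 hε.le
    linarith
end
end

section
/- Let G be any finite simple graph, let e_G be its number of edges and T_G its number of triangles. Then 6·T_G ≤ (2·e_G)^{3/2}. -/
open scoped BigOperators Classical
open Finset Filter

noncomputable section

/-- Ordered triangles are at least six times the triangles. -/
theorem six_mul_triangle_le {V : Type*} [Fintype V] (G : SimpleGraph V) :
    6 * triangleCount G ≤ (Finset.univ.filter
      (fun t : V × V × V => G.Adj t.1 t.2.1 ∧ G.Adj t.1 t.2.2 ∧ G.Adj t.2.1 t.2.2)).card := by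
  have hm : ∀ t ∈ Finset.univ.filter
      (fun t : V × V × V => G.Adj t.1 t.2.1 ∧ G.Adj t.1 t.2.2 ∧ G.Adj t.2.1 t.2.2),
      ({t.1, t.2.1, t.2.2} : Finset V) ∈
        Finset.univ.filter (fun s : Finset V => G.IsNClique 3 s) := by
    intro t ht
    simp only [Finset.mem_filter, Finset.mem_univ, true_and] at ht ⊢
    exact SimpleGraph.is3Clique_triple_iff.2 ht
  rw [Finset.card_eq_sum_card_fiberwise hm, triangleCount, mul_comm, ← smul_eq_mul]
  apply Finset.card_nsmul_le_sum
  intro s hs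
  simp only [Finset.mem_filter, Finset.mem_univ, true_and] at hs
  obtain ⟨a, b, c, hab, hac, hbc, rfl⟩ := SimpleGraph.is3Clique_iff.1 hs
  have h6 : ({(a, b, c), (a, c, b), (b, a, c), (b, c, a), (c, a, b), (c, b, a)} :
      Finset (V × V × V)).card = 6 := by
    have h1 := hab.ne
    have h2 := hac.ne
    have h3 := hbc.ne
    simp [Finset.card_insert_of_notMem, h1, h2, h3, h1.symm, h2.symm, h3.symm]
  rw [← h6]
  apply Finset.card_le_card
  intro t ht
  simp only [Finset.mem_insert, Finset.mem_singleton] at ht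
  rcases ht with rfl | rfl | rfl | rfl | rfl | rfl <;>
    simp only [Finset.mem_filter, Finset.mem_univ, true_and] <;>
    refine ⟨?_, ?_⟩ <;>
    first
    | (ext x; simp only [Finset.mem_insert, Finset.mem_singleton]; tauto)
    | simp [hab, hac, hbc, hab.symm, hac.symm, hbc.symm]

theorem sum_adj_eq {V : Type*} [Fintype V] (G : SimpleGraph V) :
    (∑ u : V, ∑ v : V, (if G.Adj u v then (1 : ℝ) else 0)) = 2 * edgeCount G := by
  have h := G.sum_degrees_eq_twice_card_edges
  have he : edgeCount G = G.edgeFinset.card := by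
    unfold edgeCount
    congr 1
    ext e
    simp
  rw [he]
  have h2 : ((∑ v, G.degree v : ℕ) : ℝ) = ((2 * G.edgeFinset.card : ℕ) : ℝ) := by rw [h]
  push_cast at h2
  rw [← h2]
  refine Finset.sum_congr rfl fun u _ => ?_
  rw [Finset.sum_boole, ← SimpleGraph.card_neighborFinset_eq_degree,
    SimpleGraph.neighborFinset_eq_filter]

theorem analytic_bound {V : Type*} [Fintype V] (a : V → V → ℝ)
    (h0 : ∀ u v, 0 ≤ a u v) (h1 : ∀ u v, a u v ≤ 1) :
    (∑ u, ∑ v, a u v * ∑ w, a u w * a v w) ^ 2 ≤ (∑ u, ∑ v, a u v) ^ 3 := by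
  set S := ∑ u, ∑ v, a u v with hS
  have hS0 : 0 ≤ S := Finset.sum_nonneg fun u _ => Finset.sum_nonneg fun v _ => h0 u v
  have cs := Finset.sum_mul_sq_le_sq_mul_sq (Finset.univ : Finset (V × V))
    (fun p => a p.1 p.2) (fun p => ∑ w, a p.1 w * a p.2 w)
  rw [Fintype.sum_prod_type, Fintype.sum_prod_type, Fintype.sum_prod_type] at cs
  have hA : ∑ u, ∑ v, a u v ^ 2 ≤ S :=
    Finset.sum_le_sum fun u _ => Finset.sum_le_sum fun v _ => by
      nlinarith [h0 u v, h1 u v]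
  have hB : ∑ u, ∑ v, (∑ w, a u w * a v w) ^ 2 ≤ S ^ 2 := by
    rw [sq S, hS, Finset.sum_mul_sum]
    refine Finset.sum_le_sum fun u _ => Finset.sum_le_sum fun v _ => ?_
    rw [sq]
    have n0 : 0 ≤ ∑ w, a u w * a v w :=
      Finset.sum_nonneg fun w _ => mul_nonneg (h0 u w) (h0 v w)
    apply mul_le_mul _ _ n0 (Finset.sum_nonneg fun w _ => h0 u w)
    · exact Finset.sum_le_sum fun w _ => mul_le_of_le_one_right (h0 u w) (h1 v w)
    · exact Finset.sum_le_sum fun w _ => mul_le_of_le_one_left (h0 v w) (h1 u w)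
  calc _ ≤ _ := cs
    _ ≤ S * S ^ 2 := mul_le_mul hA hB
        (Finset.sum_nonneg fun u _ => Finset.sum_nonneg fun v _ => sq_nonneg _) hS0
    _ = S ^ 3 := by ring

/-- **Lower bound on the edge count for graphs with many triangles:**
`6 T_G ≤ (2 e_G)^{3/2}` for every finite simple graph `G`. -/
theorem six_triangles_le (V : Type*) [Fintype V] (G : SimpleGraph V) :
    (6 * triangleCount G : ℝ) ≤ (2 * edgeCount G : ℝ) ^ ((3 : ℝ) / 2) := by
  have hb := analytic_bound (fun u v : V => if G.Adj u v then (1 : ℝ) else 0)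
    (fun u v => by split_ifs <;> norm_num) (fun u v => by split_ifs <;> norm_num)
  rw [sum_adj_eq] at hb
  have h6 : (6 * triangleCount G : ℝ) ≤ ((Finset.univ.filter
      (fun t : V × V × V => G.Adj t.1 t.2.1 ∧ G.Adj t.1 t.2.2 ∧ G.Adj t.2.1 t.2.2)).card : ℝ) := by
    exact_mod_cast six_mul_triangle_le G
  have hN : ((Finset.univ.filter
      (fun t : V × V × V => G.Adj t.1 t.2.1 ∧ G.Adj t.1 t.2.2 ∧ G.Adj t.2.1 t.2.2)).card : ℝ) =
      ∑ u, ∑ v, (if G.Adj u v then (1 : ℝ) else 0) *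
        ∑ w, (if G.Adj u w then (1 : ℝ) else 0) * (if G.Adj v w then (1 : ℝ) else 0) := by
    rw [← Finset.sum_boole, Fintype.sum_prod_type]
    refine Finset.sum_congr rfl fun u _ => ?_
    rw [Fintype.sum_prod_type]
    refine Finset.sum_congr rfl fun v _ => ?_
    rw [Finset.mul_sum]
    refine Finset.sum_congr rfl fun w _ => ?_
    by_cases x : G.Adj u v <;> by_cases y : G.Adj u w <;> by_cases z : G.Adj v w <;>
      simp [x, y, z]
  rw [← hN] at hb
  refine h6.trans ?_
  have e0 : (0 : ℝ) ≤ 2 * edgeCount G := by positivity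
  refine (pow_le_pow_iff_left₀ (by positivity) (Real.rpow_nonneg e0 _) two_ne_zero).1 ?_
  rw [← Real.rpow_natCast ((2 * edgeCount G : ℝ) ^ ((3 : ℝ) / 2)) 2, ← Real.rpow_mul e0]
  norm_num
  exact_mod_cast hb
end
end

section
/- Fix λ > 0 and set p_n = λ/n with n > λ. Fix a > 0, C > 0, k > 0 and w ∈ (0, a). Then for every positive integer ℓ with ℓ ≤ (C a/3) · w^{−1} k^{2/3} log(1/p_n): P(T ≥ a·k and G_{n,p_n} contains no subgraph that is a seed) ≤ (1 − w/a)^ℓ. -/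
open scoped BigOperators Classical
open Finset Filter

noncomputable section

/-- The clique on the vertex set `s`. -/
def cliqueOn {V : Type*} (s : Finset V) : SimpleGraph V where
  Adj u v := u ≠ v ∧ u ∈ s ∧ v ∈ s
  symm := ⟨fun _ _ h => ⟨h.1.symm, h.2.2, h.2.1⟩⟩
  loopless := ⟨fun _ h => h.1 rfl⟩

lemma isNClique_iff_cliqueOn {V : Type*} (H : SimpleGraph V) (s : Finset V) :
    H.IsNClique 3 s ↔ s.card = 3 ∧ cliqueOn s ≤ H := by
  rw [SimpleGraph.isNClique_iff, and_comm]
  refine and_congr_right fun _ => ⟨fun h u v huv => ?_, fun h u hu v hv huv => ?_⟩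
  · exact h huv.2.1 huv.2.2 huv.1
  · exact h ⟨huv, hu, hv⟩

lemma edgeCount_cliqueOn {V : Type*} [Fintype V] (s : Finset V) (hs : s.card = 3) :
    edgeCount (cliqueOn s) ≤ 3 := by
  obtain ⟨x, y, z, _, _, _, rfl⟩ := Finset.card_eq_three.1 hs
  unfold edgeCount
  refine le_trans (Finset.card_le_card
    (t := ({s(x, y), s(x, z), s(y, z)} : Finset (Sym2 V))) ?_) Finset.card_le_three
  intro e
  induction e using Sym2.ind with
  | _ u v =>
    simp only [Finset.mem_filter, Finset.mem_univ, true_and, SimpleGraph.mem_edgeSet, cliqueOn,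
      Finset.mem_insert, Finset.mem_singleton]
    rintro ⟨h, rfl | rfl | rfl, rfl | rfl | rfl⟩ <;> simp_all [Sym2.eq_swap]

lemma edgeCount_sup {V : Type*} [Fintype V] (G H : SimpleGraph V) :
    edgeCount (G ⊔ H) ≤ edgeCount G + edgeCount H := by
  unfold edgeCount
  refine le_trans (Finset.card_le_card ?_) (Finset.card_union_le _ _)
  intro e
  simp [SimpleGraph.edgeSet_sup]

lemma graphProb_pos {n : ℕ} {p : ℝ} (hp : 0 < p) (hp1 : p < 1) (G : SimpleGraph (Fin n)) :
    0 < graphProb n p G :=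
  mul_pos (pow_pos hp _) (pow_pos (by linarith) _)

lemma sum_graphProb (n : ℕ) (p : ℝ) : ∑ G : SimpleGraph (Fin n), graphProb n p G = 1 := by
  have h := Finset.sum_pow_mul_eq_add_pow p (1 - p) (⊤ : SimpleGraph (Fin n)).edgeFinset
  rw [add_sub_cancel, one_pow] at h
  rw [← h]
  refine Finset.sum_bij' (fun G _ => G.edgeFinset)
    (fun t _ => SimpleGraph.fromEdgeSet (t : Set (Sym2 (Fin n)))) ?_ ?_ ?_ ?_ ?_
  · intro G _
    rw [Finset.mem_powerset]
    exact SimpleGraph.edgeFinset_mono le_top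
  · simp
  · intro G _
    simp
  · intro t ht
    rw [Finset.mem_powerset] at ht
    ext e
    simp only [SimpleGraph.mem_edgeFinset, SimpleGraph.edgeSet_fromEdgeSet, Set.mem_sdiff,
      Finset.mem_coe, and_iff_left_iff_imp]
    intro he
    have := ht he
    simpa using this
  · intro G _
    have h1 : edgeCount G = G.edgeFinset.card := by
      unfold edgeCount
      congr 1
      ext e
      simp
    rw [graphProb, h1, SimpleGraph.card_edgeFinset_top_eq_card_choose_two, Fintype.card_fin]

lemma prob_nonneg {n : ℕ} {p : ℝ} (hp : 0 < p) (hp1 : p < 1) (A : Set (SimpleGraph (Fin n))) :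
    0 ≤ prob n p A :=
  Finset.sum_nonneg fun G _ => by
    split_ifs
    · exact (graphProb_pos hp hp1 G).le
    · exact le_rfl

lemma prob_above_pos {n : ℕ} {p : ℝ} (hp : 0 < p) (hp1 : p < 1) (G : SimpleGraph (Fin n)) :
    0 < prob n p {H | G ≤ H} := by
  refine Finset.sum_pos' (fun H _ => ?_) ⟨G, Finset.mem_univ _, ?_⟩
  · split_ifs
    · exact (graphProb_pos hp hp1 H).le
    · exact le_rfl
  · rw [if_pos (by simp)]
    exact graphProb_pos hp hp1 G

lemma triangleCount_eq_sum {n : ℕ} (H : SimpleGraph (Fin n)) :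
    (triangleCount H : ℝ) =
      ∑ s ∈ Finset.powersetCard 3 (Finset.univ : Finset (Fin n)),
        if cliqueOn s ≤ H then (1 : ℝ) else 0 := by
  rw [Finset.sum_boole]
  unfold triangleCount
  congr 2
  ext s
  simp [isNClique_iff_cliqueOn, Finset.mem_powersetCard]

/-- Weighted sum of a function over all graphs containing `G`. -/
def above (n : ℕ) (p : ℝ) (G : SimpleGraph (Fin n)) (f : SimpleGraph (Fin n) → ℝ) : ℝ :=
  ∑ H : SimpleGraph (Fin n), if G ≤ H then graphProb n p H * f H else 0

lemma above_mul_triangle (n : ℕ) (p : ℝ) (G : SimpleGraph (Fin n))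
    (f : SimpleGraph (Fin n) → ℝ) :
    above n p G (fun H => f H * triangleCount H) =
      ∑ s ∈ Finset.powersetCard 3 (Finset.univ : Finset (Fin n)),
        above n p (G ⊔ cliqueOn s) f := by
  unfold above
  rw [Finset.sum_comm]
  refine Finset.sum_congr rfl fun H _ => ?_
  by_cases hG : G ≤ H
  · simp only [hG, if_true, sup_le_iff, true_and]
    rw [triangleCount_eq_sum, Finset.mul_sum, Finset.mul_sum]
    refine Finset.sum_congr rfl fun s _ => ?_
    split_ifs <;> simp
  · simp [hG]

lemma above_one (n : ℕ) (p : ℝ) (G : SimpleGraph (Fin n)) :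
    above n p G (fun _ => 1) = prob n p {H | G ≤ H} := by
  simp [above, prob]

lemma above_tri {n : ℕ} {p : ℝ} (hp : 0 < p) (hp1 : p < 1) (G : SimpleGraph (Fin n)) :
    ∑ s ∈ Finset.powersetCard 3 (Finset.univ : Finset (Fin n)),
        prob n p {H | G ⊔ cliqueOn s ≤ H} = condTri n p G * prob n p {H | G ≤ H} := by
  have h := above_mul_triangle n p G (fun _ => 1)
  simp only [above_one, one_mul] at h
  rw [← h, condTri, condExpect, div_mul_cancel₀ _ (prob_above_pos hp hp1 G).ne']
  rfl

/-- The moment bound on the event of not containing a seed. -/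
lemma moment_bound_s5 {n : ℕ} {p a w C k : ℝ} (hp : 0 < p) (hp1 : p < 1) (hk : 0 < k)
    (hw2 : w < a) (ℓ : ℕ)
    (hub : 3 * (ℓ : ℝ) ≤ C * a * w⁻¹ * k ^ ((2 : ℝ) / 3) * Real.log (1 / p)) (j : ℕ) :
    ∀ G : SimpleGraph (Fin n), edgeCount G + 3 * j ≤ 3 * ℓ →
      above n p G (fun H => (if ∃ G', G' ≤ H ∧ IsSeed n p a w C k G' then (0 : ℝ) else 1) *
        (triangleCount H : ℝ) ^ j) ≤ ((a - w) * k) ^ j * prob n p {H | G ≤ H} := by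
  induction j with
  | zero =>
    intro G _
    rw [pow_zero, one_mul, ← above_one]
    refine Finset.sum_le_sum fun H _ => ?_
    have := (graphProb_pos hp hp1 H).le
    beta_reduce
    split_ifs <;> simp [this]
  | succ j ih =>
    intro G hG
    have hak : 0 ≤ (a - w) * k := mul_nonneg (by linarith) hk.le
    by_cases hs : IsSeed n p a w C k G
    · refine le_trans (le_of_eq ?_) (mul_nonneg (pow_nonneg hak _) (prob_nonneg hp hp1 _))
      refine Finset.sum_eq_zero fun H _ => ?_
      beta_reduce
      split_ifs with h1 h2
      · simp
      · exact absurd ⟨G, h1, hs⟩ h2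
      · rfl
    · have hlt : condTri n p G ≤ (a - w) * k := by
        by_contra hcon
        refine hs ⟨(not_le.1 hcon).le, le_trans ?_ hub⟩
        have : edgeCount G ≤ 3 * ℓ := by omega
        exact_mod_cast this
      simp only [pow_succ, ← mul_assoc]
      rw [above_mul_triangle]
      refine le_trans (Finset.sum_le_sum fun s hs3 => ih (G ⊔ cliqueOn s) ?_) ?_
      · have h1 := edgeCount_sup G (cliqueOn s)
        have h2 := edgeCount_cliqueOn s (Finset.mem_powersetCard.1 hs3).2
        omega
      · rw [← Finset.mul_sum, above_tri hp hp1, mul_assoc (((a - w) * k) ^ j), mul_assoc (((a - w) * k) ^ j)]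
        exact mul_le_mul_of_nonneg_left
          (mul_le_mul_of_nonneg_right hlt (prob_nonneg hp hp1 _)) (pow_nonneg hak _)

/-- **Unlikely not to contain a seed.** -/
theorem unlikely_no_seed (l a C k w : ℝ) (n : ℕ) (hl : 0 < l) (hn : l < n)
    (ha : 0 < a) (hC : 0 < C) (hk : 0 < k) (hw1 : 0 < w) (hw2 : w < a)
    (ℓ : ℕ) (hℓ : 1 ≤ ℓ)
    (hub : (ℓ : ℝ) ≤ C * a / 3 * w⁻¹ * k ^ ((2 : ℝ) / 3) * Real.log (1 / (l / n))) :
    prob n (l / n)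
        ({H | a * k ≤ (triangleCount H : ℝ)} ∩
          {H | ¬ ∃ G, G ≤ H ∧ IsSeed n (l / n) a w C k G}) ≤
      (1 - w / a) ^ ℓ := by
  have hn0 : (0 : ℝ) < n := hl.trans hn
  have hp : 0 < l / n := div_pos hl hn0
  have hp1 : l / n < 1 := (div_lt_one hn0).2 hn
  set p := l / (n : ℝ) with hpdef
  have hm := moment_bound_s5 (n := n) (C := C) hp hp1 hk hw2 ℓ
    (by linarith [hub]) ℓ ⊥
    (by simp [edgeCount])
  have hone : prob n p {H : SimpleGraph (Fin n) | ⊥ ≤ H} = 1 := by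
    rw [← sum_graphProb n p]
    simp [prob]
  rw [hone, mul_one] at hm
  have hak : 0 < a * k := mul_pos ha hk
  have heq : (1 - w / a) ^ ℓ = ((a - w) * k) ^ ℓ / (a * k) ^ ℓ := by
    rw [← div_pow]
    congr 1
    field_simp
  rw [heq, le_div_iff₀ (pow_pos hak _)]
  refine le_trans ?_ hm
  unfold prob above
  rw [Finset.sum_mul]
  refine Finset.sum_le_sum fun H _ => ?_
  have hg := (graphProb_pos hp hp1 H).le
  rw [if_pos (bot_le : ⊥ ≤ H)]
  beta_reduce
  by_cases hmem : H ∈ ({H | a * k ≤ (triangleCount H : ℝ)} ∩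
      {H | ¬ ∃ G, G ≤ H ∧ IsSeed n p a w C k G})
  · rw [if_pos hmem, if_neg hmem.2, one_mul]
    exact mul_le_mul_of_nonneg_left (pow_le_pow_left₀ hak.le hmem.1 _) hg
  · rw [if_neg hmem, zero_mul]
    refine mul_nonneg hg (mul_nonneg ?_ (by positivity))
    split_ifs <;> norm_num
end
end

section
/- Fix λ > 0 and set p_n = λ/n with n > λ. Fix a > 0, w > 0, C > 0 and k > 0. Then every seed G ⊆ K_n contains a subgraph G* ⊆ G that is a core (with the same parameters a, w, C, k). -/
open scoped BigOperators Classical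
open Finset Filter

noncomputable section

lemma edgeCount_deleteEdges_add_one {n : ℕ} (G : SimpleGraph (Fin n)) (e : Sym2 (Fin n))
    (he : e ∈ G.edgeSet) : edgeCount (G.deleteEdges {e}) + 1 = edgeCount G := by
  unfold edgeCount
  rw [← Finset.card_erase_add_one (s := Finset.univ.filter (fun x => x ∈ G.edgeSet)) (a := e)
    (by simpa using he)]
  congr 2
  ext x
  simp [SimpleGraph.edgeSet_deleteEdges, and_comm]

/-- Greedy deletion: from any graph with `b + d * e_G ≤ f G`, removing edges whose removal costs
less than `d` terminates at a graph where every edge matters. -/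
lemma greedy_core {n : ℕ} (f : SimpleGraph (Fin n) → ℝ) (b d : ℝ) (m : ℕ) :
    ∀ G : SimpleGraph (Fin n), edgeCount G = m → b + d * edgeCount G ≤ f G →
      ∃ G' ≤ G, edgeCount G' ≤ edgeCount G ∧ b + d * edgeCount G' ≤ f G' ∧
        ∀ e ∈ G'.edgeSet, d ≤ f G' - f (G'.deleteEdges {e}) := by
  induction m with
  | zero =>
    intro G hm hb
    refine ⟨G, le_rfl, le_rfl, hb, fun e he => ?_⟩
    have := edgeCount_deleteEdges_add_one G e he
    omega
  | succ m ih =>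
    intro G hm hb
    by_cases h : ∀ e ∈ G.edgeSet, d ≤ f G - f (G.deleteEdges {e})
    · exact ⟨G, le_rfl, le_rfl, hb, h⟩
    · push Not at h
      obtain ⟨e, he, hlt⟩ := h
      have hc := edgeCount_deleteEdges_add_one G e he
      have hc' : (edgeCount G : ℝ) = edgeCount (G.deleteEdges {e}) + 1 := by
        exact_mod_cast hc.symm
      rw [hc'] at hb
      obtain ⟨G', h1, h2, h3, h4⟩ := ih (G.deleteEdges {e}) (by omega) (by linarith)
      exact ⟨G', h1.trans (G.deleteEdges_le _), by omega, h3, h4⟩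

/-- **Seeds contain cores.** -/
theorem seed_contains_core (l a w C k : ℝ) (n : ℕ) (hl : 0 < l) (hn : l < n)
    (ha : 0 < a) (hw : 0 < w) (hC : 0 < C) (hk : 0 < k)
    (G : SimpleGraph (Fin n)) (hG : IsSeed n (l / n) a w C k G) :
    ∃ G' : SimpleGraph (Fin n), G' ≤ G ∧ IsCore n (l / n) a w C k G' := by
  obtain ⟨h1, h2⟩ := hG
  have hn0 : (0 : ℝ) < n := hl.trans hn
  have hL : 0 < Real.log (1 / (l / n)) := by
    apply Real.log_pos
    rw [one_div_div, lt_div_iff₀ hl]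
    linarith
  set L := Real.log (1 / (l / n)) with hLdef
  set d := w ^ 2 * k ^ ((1 : ℝ) / 3) / (C * a * L) with hd
  have hd0 : 0 < d := by positivity
  have hkk : k ^ ((1 : ℝ) / 3) * k ^ ((2 : ℝ) / 3) = k := by
    rw [← Real.rpow_add hk]
    norm_num
  have hprod : d * (C * a * w⁻¹ * k ^ ((2 : ℝ) / 3) * L) = w * k := by
    have : d * (C * a * w⁻¹ * k ^ ((2 : ℝ) / 3) * L) =
        w * (k ^ ((1 : ℝ) / 3) * k ^ ((2 : ℝ) / 3)) := by
      rw [hd]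
      field_simp
    rw [this, hkk]
  have h3 := mul_le_mul_of_nonneg_left h2 hd0.le
  obtain ⟨G', g1, g2, g3, g4⟩ := greedy_core (condTri n (l / n)) ((a - 2 * w) * k) d
    (edgeCount G) G rfl (by linarith)
  have h5 : (0 : ℝ) ≤ d * edgeCount G' := by positivity
  have h6 : (edgeCount G' : ℝ) ≤ edgeCount G := by exact_mod_cast g2
  exact ⟨G', g1, by linarith, h6.trans h2, g4⟩
end
end
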